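/- arXiv:1910.14439 — 2 statements merged into one kernel-verified Lean document; each statement's English description precedes it below -/
import Mathlib

section
/- Hypercube comparison for the trace chain: for the periodic SPM at L=L_c=⌊e^{β/2}⌋ and β sufficiently large, let Q_𝒢 be the trace generator of the Glauber dynamics on the set 𝒢 of ground states (the Schur complement Q_𝒢 = 𝓛_{𝒢𝒢} − 𝓛_{𝒢,𝒢^c}(𝓛_{𝒢^c,𝒢^c})^{-1}𝓛_{𝒢^c,𝒢}). Then there exist numbers a_L and a_L' with c₁L^{-8} ≤ a_L ≤ c₂L^{-8} and 0 ≤ a_L' ≤ C L^{-9} (for absolute constants c₁,c₂,C) such that, defining the rate matrix Q_hyp on {-1,+1}^{2L-1} by Q_hyp(u,v)=a_L if |u−v|=1 or u=−v, Q_hyp(u,v)=a_L' if |u−v|∈{2,2L−2}, and Q_hyp(u,v)=0 for all other u≠v (diagonal chosen so rows sum to zero), one has sup_{u≠v∈{-1,+1}^{2L-1}} |Q_𝒢(w⁻¹(u),w⁻¹(v)) − Q_hyp(u,v)| ≤ C'·L^{-9}, where |u−v| denotes Hamming distance. -/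
open scoped BigOperators

attribute [local instance] Classical.propDecidable

noncomputable section

namespace SPMP

/-- Spin configurations on the `L × L` torus; `true` codes spin `+1`. -/
abbrev ConfigP (L : ℕ) := Fin L × Fin L → Bool

/-- The real spin value of a Boolean spin. -/
def sval (b : Bool) : ℝ := if b then 1 else -1

/-- Cyclic successor on `Fin L`. -/
def fsucc {L : ℕ} (i : Fin L) : Fin L := ⟨(i.val + 1) % L, Nat.mod_lt _ i.pos⟩

/-- The periodic plaquette variable
`p_x(σ) = σ_{(x₁,x₂)} σ_{(x₁+1,x₂)} σ_{(x₁,x₂+1)} σ_{(x₁+1,x₂+1)}` (coordinates mod `L`). -/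
def plaqP (L : ℕ) (σ : ConfigP L) (x : Fin L × Fin L) : ℝ :=
  sval (σ x) * sval (σ (fsucc x.1, x.2)) * sval (σ (x.1, fsucc x.2)) *
    sval (σ (fsucc x.1, fsucc x.2))

/-- The periodic Hamiltonian `H(σ) = -(1/2) ∑_x p_x(σ)`. -/
def hamP (L : ℕ) (σ : ConfigP L) : ℝ := -(1 / 2) * ∑ x : Fin L × Fin L, plaqP L σ x

/-- The Gibbs measure `π(σ) = e^{-βH(σ)}/Z`. -/
def gibbsP (L : ℕ) (β : ℝ) (σ : ConfigP L) : ℝ :=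
  Real.exp (-β * hamP L σ) / ∑ η : ConfigP L, Real.exp (-β * hamP L η)

/-- Flip one spin. -/
def flipP (L : ℕ) (σ : ConfigP L) (x : Fin L × Fin L) : ConfigP L :=
  fun i => if i = x then !(σ i) else σ i

/-- Metropolis rate of the move `σ → η`: `min(1, e^{-β(H(η)-H(σ))})`. -/
def metroRateP (L : ℕ) (β : ℝ) (σ η : ConfigP L) : ℝ :=
  min 1 (Real.exp (-β * (hamP L η - hamP L σ)))

/-- The Glauber generator of the periodic dynamics, as a matrix. -/
def genP (L : ℕ) (β : ℝ) : Matrix (ConfigP L) (ConfigP L) ℝ :=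
  fun σ η =>
    if η = σ then -(∑ x : Fin L × Fin L, metroRateP L β σ (flipP L σ x))
    else ∑ x : Fin L × Fin L, if η = flipP L σ x then metroRateP L β σ (flipP L σ x) else 0

/-- Entrywise matrix exponential `∑ₖ Aᵏ/k!`. -/
def mexp {n : Type*} [Fintype n] [DecidableEq n] (A : Matrix n n ℝ) : Matrix n n ℝ :=
  fun i j => ∑' k : ℕ, (A ^ k) i j / (Nat.factorial k : ℝ)

/-- Total-variation distance between two (probability) vectors. -/
def tv {n : Type*} [Fintype n] (μ ν : n → ℝ) : ℝ := (∑ s, |μ s - ν s|) / 2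

/-- The `ε`-mixing time of the periodic Glauber dynamics. -/
def tmixP (L : ℕ) (β ε : ℝ) : ℝ :=
  sInf {t : ℝ | 0 < t ∧ ∀ σ : ConfigP L, tv (mexp (t • genP L β) σ) (gibbsP L β) < ε}

/-- The set of ground states: minimizers of the Hamiltonian. -/
def GroundP (L : ℕ) : Set (ConfigP L) := {σ | ∀ η : ConfigP L, hamP L σ ≤ hamP L η}

/-- The critical length scale `L_c = ⌊e^{β/2}⌋`. -/
def Lc (β : ℝ) : ℕ := ⌊Real.exp (β / 2)⌋₊

end SPMP

namespace SPMP

/-- The inverse `w⁻¹ : {-1,+1}^{2L-1} → 𝒢` of the ground-state bijection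
(Definition `DefBijectionPeriodic`). -/
def wInv (L : ℕ) (v : Fin (2 * L - 1) → Bool) : ConfigP L :=
  fun z =>
    if h : z.2.val = L - 1 then
      v ⟨z.1.val, by have h1 := z.1.isLt; omega⟩
    else
      v ⟨z.1.val, by have h1 := z.1.isLt; omega⟩ ==
        v ⟨L + z.2.val, by have h2 := z.2.isLt; omega⟩

/-- The trace (Schur complement) generator of the dynamics on the set `𝒢` of ground states:
`Q_𝒢 = 𝓛_{𝒢𝒢} - 𝓛_{𝒢,𝒢ᶜ} (𝓛_{𝒢ᶜ,𝒢ᶜ})⁻¹ 𝓛_{𝒢ᶜ,𝒢}`. -/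
def traceGen (L : ℕ) (β : ℝ) : Matrix ↥(GroundP L) ↥(GroundP L) ℝ :=
  Matrix.of (fun i j : ↥(GroundP L) => genP L β i.1 j.1) -
    Matrix.of (fun (i : ↥(GroundP L)) (j : ↥(GroundP L)ᶜ) => genP L β i.1 j.1) *
      (Matrix.of fun i j : ↥(GroundP L)ᶜ => genP L β i.1 j.1)⁻¹ *
      Matrix.of (fun (i : ↥(GroundP L)ᶜ) (j : ↥(GroundP L)) => genP L β i.1 j.1)

/-- Hamming distance on the hypercube `{-1,+1}^N`. -/
def hamDist {N : ℕ} (u v : Fin N → Bool) : ℕ :=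
  (Finset.univ.filter fun i : Fin N => u i ≠ v i).card

/-- Coordinatewise negation on the hypercube. -/
def negv {N : ℕ} (u : Fin N → Bool) : Fin N → Bool := fun i => !(u i)

/-- The rate matrix `Q_hyp` on `{-1,+1}^{2L-1}` with rate `a` across Hamming distance `1` and
to the antipode, rate `a'` across Hamming distances `2` and `2L-2`, zero otherwise, and
diagonal making rows sum to zero. -/
def Qhyp (L : ℕ) (a a' : ℝ) :
    Matrix (Fin (2 * L - 1) → Bool) (Fin (2 * L - 1) → Bool) ℝ :=
  fun u v =>
    if u = v then
      -(∑ w ∈ Finset.univ.filter (fun w => w ≠ u),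
        (if hamDist u w = 1 ∨ w = negv u then a
         else if hamDist u w = 2 ∨ hamDist u w = 2 * L - 2 then a' else 0))
    else
      if hamDist u v = 1 ∨ v = negv u then a
      else if hamDist u v = 2 ∨ hamDist u v = 2 * L - 2 then a' else 0

/-! ### Boolean configurations under pointwise `xor` -/

/-- Pointwise exclusive or of two configurations. -/
def xr {L : ℕ} (σ A : ConfigP L) : ConfigP L := fun z => xor (σ z) (A z)

/-- The constant configuration `-1`. -/
def zeroC (L : ℕ) : ConfigP L := fun _ => false

/-- The indicator configuration of one site. -/
def single {L : ℕ} (x : Fin L × Fin L) : ConfigP L := fun z => decide (z = x)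

/-- Reflection of a configuration across the diagonal. -/
def swapC {L : ℕ} (σ : ConfigP L) : ConfigP L := fun z => σ z.swap

lemma xr_assoc {L : ℕ} (σ A B : ConfigP L) : xr (xr σ A) B = xr σ (xr A B) := by
  funext z; simp [xr]

lemma xr_comm {L : ℕ} (A B : ConfigP L) : xr A B = xr B A := by
  funext z; simp [xr, Bool.xor_comm]

lemma xr_self {L : ℕ} (A : ConfigP L) : xr A A = zeroC L := by
  funext z; simp [xr, zeroC]

lemma xr_zeroC {L : ℕ} (A : ConfigP L) : xr A (zeroC L) = A := by
  funext z; simp [xr, zeroC]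

lemma zeroC_xr {L : ℕ} (A : ConfigP L) : xr (zeroC L) A = A := by
  funext z; simp [xr, zeroC]

lemma xr_cancel {L : ℕ} (σ A : ConfigP L) : xr σ (xr σ A) = A := by
  rw [← xr_assoc, xr_self, zeroC_xr]

lemma flipP_eq_xr {L : ℕ} (σ : ConfigP L) (x : Fin L × Fin L) :
    flipP L σ x = xr σ (single x) := by
  funext z
  by_cases h : z = x <;> simp [flipP, xr, single, h]

lemma flipP_flipP {L : ℕ} (σ : ConfigP L) (x : Fin L × Fin L) :
    flipP L (flipP L σ x) x = σ := by
  rw [flipP_eq_xr, flipP_eq_xr, xr_assoc, xr_self, xr_zeroC]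

lemma flipP_ne {L : ℕ} (σ : ConfigP L) (x : Fin L × Fin L) : flipP L σ x ≠ σ := by
  intro h
  have := congrFun h x
  simp [flipP] at this

lemma swapC_xr {L : ℕ} (σ A : ConfigP L) : swapC (xr σ A) = xr (swapC σ) (swapC A) := rfl

lemma swapC_swapC {L : ℕ} (σ : ConfigP L) : swapC (swapC σ) = σ := by
  funext z; simp [swapC]

lemma swapC_flipP {L : ℕ} (σ : ConfigP L) (x : Fin L × Fin L) :
    swapC (flipP L σ x) = flipP L (swapC σ) x.swap := by
  funext z
  have : z.swap = x ↔ z = x.swap := by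
    constructor
    · rintro rfl; simp
    · rintro rfl; simp
  simp only [swapC, flipP, this]

/-! ### Plaquettes and energy -/

lemma sval_xor (a b : Bool) : sval (xor a b) = -(sval a * sval b) := by
  cases a <;> cases b <;> simp [sval]

lemma plaqP_xr {L : ℕ} (σ A : ConfigP L) (y : Fin L × Fin L) :
    plaqP L (xr σ A) y = plaqP L σ y * plaqP L A y := by
  simp only [plaqP, xr, sval_xor]; ring

lemma plaqP_zeroC {L : ℕ} (y : Fin L × Fin L) : plaqP L (zeroC L) y = 1 := by
  simp [plaqP, zeroC, sval]

lemma plaqP_swapC {L : ℕ} (σ : ConfigP L) (y : Fin L × Fin L) :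
    plaqP L (swapC σ) y = plaqP L σ y.swap := by
  obtain ⟨a, b⟩ := y
  simp only [plaqP, swapC, Prod.swap_prod_mk]; ring

lemma sval_eq (b : Bool) : sval b = 1 ∨ sval b = -1 := by
  cases b <;> simp [sval]

lemma plaqP_eq {L : ℕ} (σ : ConfigP L) (y : Fin L × Fin L) :
    plaqP L σ y = 1 ∨ plaqP L σ y = -1 := by
  unfold plaqP
  rcases sval_eq (σ y) with h | h <;> rcases sval_eq (σ (fsucc y.1, y.2)) with h' | h' <;>
    rcases sval_eq (σ (y.1, fsucc y.2)) with h'' | h'' <;>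
    rcases sval_eq (σ (fsucc y.1, fsucc y.2)) with h''' | h''' <;> simp [h, h', h'', h''']

lemma plaqP_le_one {L : ℕ} (σ : ConfigP L) (y : Fin L × Fin L) : plaqP L σ y ≤ 1 := by
  rcases plaqP_eq σ y with h | h <;> norm_num [h]

lemma hamP_swapC {L : ℕ} (σ : ConfigP L) : hamP L (swapC σ) = hamP L σ := by
  unfold hamP
  congr 1
  simp only [plaqP_swapC]
  exact Equiv.sum_comp (Equiv.prodComm (Fin L) (Fin L)) (plaqP L σ)

lemma mem_GroundP {L : ℕ} (σ : ConfigP L) : σ ∈ GroundP L ↔ ∀ y, plaqP L σ y = 1 := by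
  constructor
  · intro h y
    have h0 := h (zeroC L)
    simp only [hamP, plaqP_zeroC] at h0
    have h1 : ∑ y, plaqP L σ y = ∑ _y : Fin L × Fin L, (1 : ℝ) :=
      le_antisymm (Finset.sum_le_sum fun y _ => plaqP_le_one σ y) (by linarith)
    exact (Finset.sum_eq_sum_iff_of_le fun y _ => plaqP_le_one σ y).1 h1 y (Finset.mem_univ y)
  · intro h η
    have h1 : ∑ y, plaqP L η y ≤ ∑ y, plaqP L σ y :=
      Finset.sum_le_sum fun y _ => by rw [h y]; exact plaqP_le_one η y
    simp only [hamP]; linarith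

lemma zeroC_mem (L : ℕ) : zeroC L ∈ GroundP L := (mem_GroundP _).2 fun _ => plaqP_zeroC _

lemma xr_mem {L : ℕ} {σ τ : ConfigP L} (h : σ ∈ GroundP L) (h' : τ ∈ GroundP L) :
    xr σ τ ∈ GroundP L := by
  rw [mem_GroundP] at *
  intro y; rw [plaqP_xr, h, h']; norm_num

lemma swapC_mem {L : ℕ} {σ : ConfigP L} (h : σ ∈ GroundP L) : swapC σ ∈ GroundP L := by
  rw [mem_GroundP] at *
  intro y; rw [plaqP_swapC, h]

lemma hamP_xr {L : ℕ} {τ : ConfigP L} (h : τ ∈ GroundP L) (σ : ConfigP L) :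
    hamP L (xr σ τ) = hamP L σ := by
  rw [mem_GroundP] at h
  simp only [hamP, plaqP_xr, h, mul_one]

lemma fsucc_eq {L : ℕ} [NeZero L] (i : Fin L) : fsucc i = i + 1 := by
  ext; simp [fsucc, Fin.val_add]

/-- The plaquette of a product set is determined by the boundaries of its factors. -/
lemma plaqP_and {L : ℕ} [NeZero L] (a b : Fin L → Bool) (y : Fin L × Fin L) :
    plaqP L (fun z => a z.1 && b z.2) y =
      1 - 2 * ((if xor (a y.1) (a (y.1 + 1)) then 1 else 0) *
        (if xor (b y.2) (b (y.2 + 1)) then 1 else 0)) := by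
  simp only [plaqP, fsucc_eq]
  cases a y.1 <;> cases a (y.1 + 1) <;> cases b y.2 <;> cases b (y.2 + 1) <;>
    simp [sval] <;> norm_num

/-- Real indicator of the two unit intervals adjacent to `a`. -/
def nbr {L : ℕ} [NeZero L] (a y : Fin L) : ℝ :=
  (if y = a then 1 else 0) + (if y = a - 1 then 1 else 0)

lemma one_ne {L : ℕ} [NeZero L] (hL : 2 ≤ L) : (1 : Fin L) ≠ 0 := by
  intro h
  have := congrArg Fin.val h
  simp [Nat.mod_eq_of_lt (show 1 < L by omega)] at this

lemma bdry_point {L : ℕ} [NeZero L] (hL : 2 ≤ L) (a y : Fin L) :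
    (if xor (decide (y = a)) (decide (y + 1 = a)) then (1 : ℝ) else 0) = nbr a y := by
  have h1 : y + 1 = a ↔ y = a - 1 := eq_sub_iff_add_eq.symm
  have h2 : a ≠ a - 1 := fun h => one_ne hL (by rwa [eq_comm, sub_eq_self] at h)
  by_cases ha : y = a
  · subst ha; simp [nbr, h2, one_ne hL]
  · simp [nbr, ha, h1]

lemma sum_nbr {L : ℕ} [NeZero L] (f : Fin L → ℝ) (a : Fin L) :
    ∑ y, f y * nbr a y = f a + f (a - 1) := by
  simp [nbr, mul_add, Finset.sum_add_distrib]

lemma plaqP_single {L : ℕ} [NeZero L] (hL : 2 ≤ L) (x y : Fin L × Fin L) :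
    plaqP L (single x) y = 1 - 2 * (nbr x.1 y.1 * nbr x.2 y.2) := by
  have : (single x : ConfigP L) = fun z => decide (z.1 = x.1) && decide (z.2 = x.2) := by
    funext z
    rw [single, ← Bool.decide_and]
    exact decide_eq_decide.2 Prod.ext_iff
  have h := plaqP_and (fun i => decide (i = x.1)) (fun i => decide (i = x.2)) y
  rw [bdry_point hL, bdry_point hL] at h
  rw [this, ← h]

/-- The energy cost of flipping the spin at `x`. -/
def cost {L : ℕ} [NeZero L] (σ : ConfigP L) (x : Fin L × Fin L) : ℝ :=
  ∑ y, plaqP L σ y * (nbr x.1 y.1 * nbr x.2 y.2)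

lemma hamP_flipP {L : ℕ} [NeZero L] (hL : 2 ≤ L) (σ : ConfigP L) (x : Fin L × Fin L) :
    hamP L (flipP L σ x) - hamP L σ = cost σ x := by
  simp only [hamP, flipP_eq_xr, plaqP_xr, plaqP_single hL, cost]
  rw [← mul_sub, ← Finset.sum_sub_distrib, Finset.mul_sum]
  refine Finset.sum_congr rfl fun y _ => ?_
  ring

lemma sum_nbr_mul {L : ℕ} [NeZero L] (f g : Fin L → ℝ) (x : Fin L × Fin L) :
    ∑ y : Fin L × Fin L, (f y.1 * g y.2) * (nbr x.1 y.1 * nbr x.2 y.2) =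
      (f x.1 + f (x.1 - 1)) * (g x.2 + g (x.2 - 1)) := by
  rw [← sum_nbr, ← sum_nbr, Finset.sum_mul_sum, Fintype.sum_prod_type]
  refine Finset.sum_congr rfl fun a _ => Finset.sum_congr rfl fun b _ => ?_
  ring

/-- The cost of a flip in a configuration whose set of defects is a product. -/
lemma cost_of_plaqP {L : ℕ} [NeZero L] {σ : ConfigP L} {f g : Fin L → ℝ}
    (h : ∀ y, plaqP L σ y = 1 - 2 * (f y.1 * g y.2)) (x : Fin L × Fin L) :
    cost σ x = 4 - 2 * ((f x.1 + f (x.1 - 1)) * (g x.2 + g (x.2 - 1))) := by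
  have h1 := sum_nbr_mul (fun _ => 1) (fun _ => 1) x
  have h2 := sum_nbr_mul f g x
  have h3 : cost σ x = ∑ y : Fin L × Fin L, (1 * 1) * (nbr x.1 y.1 * nbr x.2 y.2) -
      2 * ∑ y : Fin L × Fin L, (f y.1 * g y.2) * (nbr x.1 y.1 * nbr x.2 y.2) := by
    rw [cost, Finset.mul_sum, ← Finset.sum_sub_distrib]
    exact Finset.sum_congr rfl fun y _ => by rw [h y]; ring
  rw [h3, h1, h2]
  norm_num

lemma cost_ground {L : ℕ} [NeZero L] {σ : ConfigP L} (h : σ ∈ GroundP L)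
    (x : Fin L × Fin L) : cost σ x = 4 := by
  rw [mem_GroundP] at h
  rw [cost_of_plaqP (f := fun _ => 0) (g := fun _ => 0) (fun y => by rw [h y]; simp)]
  simp

lemma metroRateP_flipP {L : ℕ} [NeZero L] (hL : 2 ≤ L) (β : ℝ) (σ : ConfigP L)
    (x : Fin L × Fin L) :
    metroRateP L β σ (flipP L σ x) = min 1 (Real.exp (-β * cost σ x)) := by
  rw [metroRateP, hamP_flipP hL]

lemma metroRateP_pos {L : ℕ} (β : ℝ) (σ η : ConfigP L) : 0 < metroRateP L β σ η :=
  lt_min one_pos (Real.exp_pos _)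

/-! ### The generator as an operator, and harmonic extensions -/

/-- The Glauber generator acting on functions. -/
def act (L : ℕ) (β : ℝ) (h : ConfigP L → ℝ) (σ : ConfigP L) : ℝ :=
  ∑ x, metroRateP L β σ (flipP L σ x) * (h (flipP L σ x) - h σ)

lemma sum_genP_mul {L : ℕ} (β : ℝ) (h : ConfigP L → ℝ) (σ : ConfigP L) :
    ∑ η, genP L β σ η * h η = act L β h σ := by
  have key : ∀ η, genP L β σ η * h η =
      ∑ x, ((if η = flipP L σ x then metroRateP L β σ (flipP L σ x) * h η else 0) -
        (if η = σ then metroRateP L β σ (flipP L σ x) * h η else 0)) := by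
    intro η
    unfold genP
    by_cases hη : η = σ
    · have : ∀ x, η ≠ flipP L σ x := fun x => hη ▸ (flipP_ne σ x).symm
      simp [hη, (flipP_ne σ _).symm, Finset.sum_mul]
    · simp [hη, Finset.sum_mul, ite_mul]
  simp only [key]
  rw [Finset.sum_comm, act]
  refine Finset.sum_congr rfl fun x _ => ?_
  rw [Finset.sum_sub_distrib, Finset.sum_ite_eq' Finset.univ, Finset.sum_ite_eq' Finset.univ]
  simp [mul_sub]

/-- A property of configurations stable under single flips is all or nothing. -/
lemma flipP_induction {L : ℕ} {P : ConfigP L → Prop} (hP : ∀ σ x, P σ → P (flipP L σ x))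
    {σ : ConfigP L} (h : P σ) (η : ConfigP L) : P η := by
  have key : ∀ s : Finset (Fin L × Fin L), P (fun z => if z ∈ s then η z else σ z) := by
    intro s
    induction s using Finset.induction_on with
    | empty => simpa using h
    | insert a s ha ih =>
      by_cases hz : η a = σ a
      · convert ih using 2 with z
        by_cases hza : z = a
        · subst hza; simp [ha, hz]
        · simp [hza]
      · convert hP _ a ih using 1
        funext z
        by_cases hza : z = a
        · subst hza
          simp only [flipP, Finset.mem_insert, true_or, if_true, ha, if_false]
          revert hz; cases η z <;> cases σ z <;> simp
        · simp [flipP, hza]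
  simpa using key Finset.univ

/-- Maximum principle for functions harmonic outside the ground states. -/
lemma le_of_harmonic {L : ℕ} {β c : ℝ} {h : ConfigP L → ℝ}
    (hh : ∀ σ ∉ GroundP L, act L β h σ = 0) (hc : ∀ σ ∈ GroundP L, h σ ≤ c)
    (σ : ConfigP L) : h σ ≤ c := by
  obtain ⟨m, -, hm⟩ := Finset.exists_max_image Finset.univ h ⟨σ, Finset.mem_univ σ⟩
  have hm' : ∀ η, h η ≤ h m := fun η => hm η (Finset.mem_univ η)
  by_contra! hσ
  have hmc : c < h m := hσ.trans_le (hm' σ)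
  have step : ∀ η x, h η = h m → h (flipP L η x) = h m := by
    intro η x hη
    have hG : η ∉ GroundP L := fun hG => by linarith [hc η hG]
    have h0 := hh η hG
    rw [act, Finset.sum_eq_zero_iff_of_nonpos] at h0
    · have := h0 x (Finset.mem_univ x)
      rcases mul_eq_zero.1 this with h1 | h1
      · exact absurd h1 (metroRateP_pos _ _ _).ne'
      · linarith
    · intro y _
      exact mul_nonpos_of_nonneg_of_nonpos (metroRateP_pos _ _ _).le
        (by linarith [hm' (flipP L η y)])
  have h0 : h (zeroC L) = h m := flipP_induction (P := fun η => h η = h m) step rfl _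
  linarith [hc _ (zeroC_mem L)]

lemma act_lin {L : ℕ} {β : ℝ} {ι : Type*} (s : Finset ι) (c : ι → ℝ) (h : ι → ConfigP L → ℝ)
    (σ : ConfigP L) :
    act L β (fun η => ∑ i ∈ s, c i * h i η) σ = ∑ i ∈ s, c i * act L β (h i) σ := by
  simp only [act, Finset.mul_sum]
  rw [Finset.sum_comm]
  refine Finset.sum_congr rfl fun x _ => ?_
  rw [← Finset.sum_sub_distrib, Finset.mul_sum]
  exact Finset.sum_congr rfl fun i _ => by ring

lemma act_neg {L : ℕ} {β : ℝ} (h : ConfigP L → ℝ) (σ : ConfigP L) :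
    act L β (fun η => - h η) σ = - act L β h σ := by
  simp only [act, ← Finset.sum_neg_distrib]
  exact Finset.sum_congr rfl fun x _ => by ring

/-- `h` is the harmonic extension of the restriction of `f` to the ground states. -/
structure IsExt (L : ℕ) (β : ℝ) (f h : ConfigP L → ℝ) : Prop where
  eq_on : ∀ σ ∈ GroundP L, h σ = f σ
  harm : ∀ σ ∉ GroundP L, act L β h σ = 0

lemma IsExt.le {L : ℕ} {β : ℝ} {f h : ConfigP L → ℝ} (H : IsExt L β f h) {c : ℝ}
    (hc : ∀ σ ∈ GroundP L, f σ ≤ c) (σ : ConfigP L) : h σ ≤ c :=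
  le_of_harmonic H.harm (fun η hη => (H.eq_on η hη).trans_le (hc η hη)) σ

lemma IsExt.neg {L : ℕ} {β : ℝ} {f h : ConfigP L → ℝ} (H : IsExt L β f h) :
    IsExt L β (fun η => - f η) (fun η => - h η) where
  eq_on σ hσ := by rw [H.eq_on σ hσ]
  harm σ hσ := by rw [act_neg, H.harm σ hσ, neg_zero]

lemma IsExt.ge {L : ℕ} {β : ℝ} {f h : ConfigP L → ℝ} (H : IsExt L β f h) {c : ℝ}
    (hc : ∀ σ ∈ GroundP L, c ≤ f σ) (σ : ConfigP L) : c ≤ h σ := by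
  have := H.neg.le (c := -c) (fun σ hσ => neg_le_neg (hc σ hσ)) σ
  linarith

lemma IsExt.sum {L : ℕ} {β : ℝ} {ι : Type*} (s : Finset ι) (c : ι → ℝ)
    {f h : ι → ConfigP L → ℝ} (H : ∀ i ∈ s, IsExt L β (f i) (h i)) :
    IsExt L β (fun η => ∑ i ∈ s, c i * f i η) (fun η => ∑ i ∈ s, c i * h i η) where
  eq_on σ hσ := Finset.sum_congr rfl fun i hi => by rw [(H i hi).eq_on σ hσ]
  harm σ hσ := by
    rw [act_lin]
    exact Finset.sum_eq_zero fun i hi => by rw [(H i hi).harm σ hσ, mul_zero]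

lemma IsExt.unique {L : ℕ} {β : ℝ} {f h h' : ConfigP L → ℝ} (H : IsExt L β f h)
    (H' : IsExt L β f h') : h = h' := by
  have key : ∀ {h h' : ConfigP L → ℝ}, IsExt L β f h → IsExt L β f h' → ∀ σ, h σ ≤ h' σ := by
    intro h h' H H' σ
    have D := IsExt.sum (Finset.univ : Finset Bool) (fun b => if b then 1 else -1)
      (f := fun _ => f) (h := fun b => if b then h else h') (by rintro (_ | _) _ <;> simpa)
    have := D.le (c := 0) (fun η _ => by simp) σ
    simp at this
    linarith
  exact funext fun σ => le_antisymm (key H H' σ) (key H' H σ)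

open scoped Matrix

/-- The block of the generator on the excited configurations. -/
def excited (L : ℕ) (β : ℝ) : Matrix ↥(GroundP L)ᶜ ↥(GroundP L)ᶜ ℝ :=
  Matrix.of fun i j => genP L β i.1 j.1

/-- Glue a function on ground states and a function on excited configurations. -/
def glue {L : ℕ} (f : ConfigP L → ℝ) (v : ↥(GroundP L)ᶜ → ℝ) (σ : ConfigP L) : ℝ :=
  if h : σ ∈ GroundP L then f σ else v ⟨σ, h⟩

lemma act_glue {L : ℕ} (β : ℝ) (f : ConfigP L → ℝ) (v : ↥(GroundP L)ᶜ → ℝ) (σ : ConfigP L) :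
    act L β (glue f v) σ = ∑ η : ↥(GroundP L), genP L β σ η.1 * f η.1 +
      ∑ η : ↥(GroundP L)ᶜ, genP L β σ η.1 * v η := by
  rw [← sum_genP_mul, ← Fintype.sum_subtype_add_sum_subtype (fun η => η ∈ GroundP L)]
  congr 1
  · refine Finset.sum_congr rfl fun η _ => ?_
    rw [glue, dif_pos η.2]
  · refine Finset.sum_congr rfl fun η _ => ?_
    rw [glue, dif_neg η.2]
    rfl

lemma isUnit_excited (L : ℕ) (β : ℝ) : IsUnit (excited L β) := by
  rw [← Matrix.mulVec_injective_iff_isUnit]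
  intro v v' hv
  have H : ∀ w : ↥(GroundP L)ᶜ → ℝ, excited L β *ᵥ w = 0 →
      IsExt L β (fun _ => 0) (glue (fun _ => 0) w) := by
    intro w hw
    refine ⟨fun σ hσ => by rw [glue, dif_pos hσ], fun σ hσ => ?_⟩
    have := congrFun hw ⟨σ, hσ⟩
    rw [act_glue]
    simpa [Matrix.mulVec, dotProduct, excited] using this
  have h0 : excited L β *ᵥ (v - v') = 0 := by
    rw [Matrix.mulVec_sub]; exact sub_eq_zero.2 hv
  have := (H _ h0).unique (H 0 (Matrix.mulVec_zero _))
  funext η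
  have h1 := congrFun this η.1
  simp only [glue, dif_neg (show η.1 ∉ GroundP L from η.2)] at h1
  exact sub_eq_zero.1 h1

lemma exists_isExt (L : ℕ) (β : ℝ) (f : ConfigP L → ℝ) :
    ∃ v : ↥(GroundP L)ᶜ → ℝ, IsExt L β f (glue f v) ∧
      v = -((excited L β)⁻¹ *ᵥ fun b => ∑ η : ↥(GroundP L), genP L β b.1 η.1 * f η.1) := by
  refine ⟨_, ⟨fun σ hσ => by rw [glue, dif_pos hσ], fun σ hσ => ?_⟩, rfl⟩
  have hdet := (Matrix.isUnit_iff_isUnit_det _).1 (isUnit_excited L β)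
  rw [act_glue]
  set w : ↥(GroundP L)ᶜ → ℝ := fun b => ∑ η : ↥(GroundP L), genP L β b.1 η.1 * f η.1 with hw
  have h1 : excited L β *ᵥ (-((excited L β)⁻¹ *ᵥ w)) = -w := by
    rw [Matrix.mulVec_neg, Matrix.mulVec_mulVec, Matrix.mul_nonsing_inv _ hdet,
      Matrix.one_mulVec]
  have h2 := congrFun h1 ⟨σ, hσ⟩
  have h3 : ∑ η : ↥(GroundP L)ᶜ, genP L β σ η.1 * (-((excited L β)⁻¹ *ᵥ w)) η = - w ⟨σ, hσ⟩ := h2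
  rw [h3]
  simp [hw]

/-- The indicator function of one configuration. -/
def ind {L : ℕ} (τ σ : ConfigP L) : ℝ := if σ = τ then 1 else 0

/-- The probability of entering the ground states at `τ`. -/
def hit (L : ℕ) (β : ℝ) (τ : ConfigP L) : ConfigP L → ℝ :=
  glue (ind τ) (exists_isExt L β (ind τ)).choose

lemma isExt_hit (L : ℕ) (β : ℝ) (τ : ConfigP L) : IsExt L β (ind τ) (hit L β τ) :=
  (exists_isExt L β (ind τ)).choose_spec.1

/-- The trace generator through hitting probabilities. -/
lemma traceGen_eq {L : ℕ} (β : ℝ) (σ τ : ↥(GroundP L)) :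
    traceGen L β σ τ = act L β (hit L β τ.1) σ.1 := by
  have hind : ∀ ρ : ConfigP L,
      ∑ η : ↥(GroundP L), genP L β ρ η.1 * ind τ.1 η.1 = genP L β ρ τ.1 := by
    intro ρ
    have : ∀ η : ↥(GroundP L), genP L β ρ η.1 * ind τ.1 η.1 =
        if η = τ then genP L β ρ η.1 else 0 := by
      intro η
      by_cases h : η = τ
      · simp [ind, h]
      · have : η.1 ≠ τ.1 := fun h' => h (Subtype.ext h')
        simp [ind, h, this]
    simp [this]
  rw [hit, act_glue, (exists_isExt L β (ind τ.1)).choose_spec.2, hind]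
  simp only [hind]
  rw [traceGen, Matrix.mul_assoc, Matrix.sub_apply, Matrix.mul_apply, sub_eq_add_neg,
    ← Finset.sum_neg_distrib]
  congr 1
  refine Finset.sum_congr rfl fun b _ => ?_
  simp [Matrix.mul_apply, Matrix.mulVec, dotProduct, excited]

/-- Symmetries of the dynamics. -/
structure IsSymm (L : ℕ) (e : ConfigP L → ConfigP L) (p : Equiv.Perm (Fin L × Fin L)) :
    Prop where
  bij : Function.Bijective e
  flip : ∀ σ x, e (flipP L σ x) = flipP L (e σ) (p x)
  ham : ∀ σ, hamP L (e σ) = hamP L σ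

lemma IsSymm.act_comp {L : ℕ} {β : ℝ} {e : ConfigP L → ConfigP L}
    {p : Equiv.Perm (Fin L × Fin L)} (he : IsSymm L e p) (h : ConfigP L → ℝ) (σ : ConfigP L) :
    act L β (h ∘ e) σ = act L β h (e σ) := by
  rw [act, act, ← Equiv.sum_comp p (fun x => metroRateP L β (e σ) (flipP L (e σ) x) * _)]
  refine Finset.sum_congr rfl fun x _ => ?_
  simp only [Function.comp, ← he.flip, metroRateP, he.ham]

lemma IsSymm.mem_iff {L : ℕ} {e : ConfigP L → ConfigP L}
    {p : Equiv.Perm (Fin L × Fin L)} (he : IsSymm L e p) (σ : ConfigP L) :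
    e σ ∈ GroundP L ↔ σ ∈ GroundP L := by
  constructor
  · intro h η
    have := h (e η)
    rwa [he.ham, he.ham] at this
  · intro h η
    obtain ⟨η, rfl⟩ := he.bij.2 η
    rw [he.ham, he.ham]; exact h η

lemma IsSymm.act_hit {L : ℕ} {β : ℝ} {e : ConfigP L → ConfigP L}
    {p : Equiv.Perm (Fin L × Fin L)} (he : IsSymm L e p) (σ τ : ConfigP L) :
    act L β (hit L β (e τ)) (e σ) = act L β (hit L β τ) σ := by
  have H : IsExt L β (ind τ) (hit L β (e τ) ∘ e) := by
    refine ⟨fun η hη => ?_, fun η hη => ?_⟩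
    · have h1 := (isExt_hit L β (e τ)).eq_on _ ((he.mem_iff η).2 hη)
      simp only [Function.comp, h1, ind, he.bij.1.eq_iff]
    · rw [he.act_comp]
      exact (isExt_hit L β (e τ)).harm _ (fun h => hη ((he.mem_iff η).1 h))
  rw [← he.act_comp, H.unique (isExt_hit L β τ)]

lemma isSymm_xr {L : ℕ} {τ : ConfigP L} (h : τ ∈ GroundP L) :
    IsSymm L (fun σ => xr σ τ) (Equiv.refl _) where
  bij := Function.Involutive.bijective fun σ => by rw [xr_assoc, xr_self, xr_zeroC]
  flip σ x := by
    simp only [flipP_eq_xr, Equiv.refl_apply]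
    rw [xr_assoc, xr_comm (single x), xr_assoc]
  ham := hamP_xr h

lemma isSymm_swapC (L : ℕ) : IsSymm L swapC (Equiv.prodComm _ _) where
  bij := Function.Involutive.bijective swapC_swapC
  flip := swapC_flipP
  ham := hamP_swapC

/-- Translation of a configuration along the second coordinate. -/
def shiftC {L : ℕ} [NeZero L] (t : Fin L) (σ : ConfigP L) : ConfigP L :=
  fun z => σ (z.1, z.2 - t)

lemma isSymm_shiftC {L : ℕ} [NeZero L] (t : Fin L) :
    IsSymm L (shiftC t) ((Equiv.refl _).prodCongr (Equiv.addRight t)) where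
  bij := Function.bijective_iff_has_inverse.2 ⟨shiftC (-t), fun σ => by
    funext z; simp [shiftC], fun σ => by funext z; simp [shiftC]⟩
  flip σ x := by
    funext z
    have : (z.1, z.2 - t) = x ↔ z = (x.1, x.2 + t) := by
      rw [Prod.ext_iff, Prod.ext_iff]; simp [sub_eq_iff_eq_add]
    simp [shiftC, flipP, this, Prod.map]
  ham σ := by
    unfold hamP
    congr 1
    rw [← Equiv.sum_comp ((Equiv.refl (Fin L)).prodCongr (Equiv.addRight t))]
    refine Finset.sum_congr rfl fun y _ => ?_
    simp [plaqP, shiftC, fsucc_eq, add_sub_assoc]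

/-- The trace rate from the configuration `-1` to `A`. -/
def rate (L : ℕ) (β : ℝ) (A : ConfigP L) : ℝ := act L β (hit L β A) (zeroC L)

lemma act_hit_eq_rate {L : ℕ} {β : ℝ} {σ : ConfigP L} (hσ : σ ∈ GroundP L) (τ : ConfigP L) :
    act L β (hit L β τ) σ = rate L β (xr σ τ) := by
  have := (isSymm_xr hσ).act_hit (β := β) (zeroC L) (xr σ τ)
  rw [rate, ← this]
  simp only [zeroC_xr]
  rw [xr_comm σ τ, xr_assoc, xr_self, xr_zeroC]

lemma rate_swapC {L : ℕ} (β : ℝ) (A : ConfigP L) : rate L β (swapC A) = rate L β A :=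
  (isSymm_swapC L).act_hit (β := β) (zeroC L) A

lemma rate_shiftC {L : ℕ} [NeZero L] (β : ℝ) (t : Fin L) (A : ConfigP L) :
    rate L β (shiftC t A) = rate L β A :=
  (isSymm_shiftC t).act_hit (β := β) (zeroC L) A

/-! ### Configurations with four defects -/

/-- Bound on the total rate of the energy-increasing moves out of a configuration with four
defects. -/
def slow (L : ℕ) (β : ℝ) : ℝ := (L : ℝ) ^ 2 * Real.exp (-4 * β) + 16 * Real.exp (-2 * β)

lemma slow_pos (L : ℕ) (β : ℝ) : 0 < slow L β := by unfold slow; positivity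

/-- The action of the generator at a configuration with four defects, up to slow moves. -/
lemma act_le_of_defects {L : ℕ} [NeZero L] (hL : 2 ≤ L) {β : ℝ} (hβ : 0 ≤ β)
    {h : ConfigP L → ℝ} (hh : ∀ σ, |h σ| ≤ 1) {η : ConfigP L} {f g : Fin L → ℝ}
    (hη : ∀ y, plaqP L η y = 1 - 2 * (f y.1 * g y.2))
    (hf : ∀ i, 0 ≤ f i) (hg : ∀ i, 0 ≤ g i) (sf : ∑ i, f i = 2) (sg : ∑ i, g i = 2)
    (S : Finset (Fin L × Fin L))
    (hS : ∀ x ∈ S, 2 ≤ (f x.1 + f (x.1 - 1)) * (g x.2 + g (x.2 - 1)))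
    (hS' : ∀ x ∉ S, (f x.1 + f (x.1 - 1)) * (g x.2 + g (x.2 - 1)) = 0 ∨
      (f x.1 + f (x.1 - 1)) * (g x.2 + g (x.2 - 1)) = 1) :
    act L β h η ≤ ∑ x ∈ S, (h (flipP L η x) - h η) + 2 * slow L β := by
  set N : Fin L × Fin L → ℝ :=
    fun x => (f x.1 + f (x.1 - 1)) * (g x.2 + g (x.2 - 1)) with hN
  have hcost : ∀ x, cost η x = 4 - 2 * N x := cost_of_plaqP hη
  have hN0 : ∀ x, 0 ≤ N x := fun x =>
    mul_nonneg (add_nonneg (hf _) (hf _)) (add_nonneg (hg _) (hg _))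
  have hsum : ∀ f : Fin L → ℝ, ∑ i, (f i + f (i - 1)) = 2 * ∑ i, f i := by
    intro f
    have := Equiv.sum_comp (Equiv.subRight (1 : Fin L)) f
    simp only [Equiv.subRight_apply] at this
    rw [Finset.sum_add_distrib, this]; ring
  have hNs : ∑ x, N x = 16 := by
    simp only [hN, Fintype.sum_prod_type]
    rw [← Finset.sum_mul_sum, hsum, hsum, sf, sg]; norm_num
  have hdiff : ∀ x, h (flipP L η x) - h η ≤ 2 := fun x => by
    linarith [(abs_le.1 (hh (flipP L η x))).2, (abs_le.1 (hh η)).1]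
  have hterm : ∀ x, metroRateP L β η (flipP L η x) * (h (flipP L η x) - h η) ≤
      (if x ∈ S then (h (flipP L η x) - h η) else 0) +
        2 * (Real.exp (-4 * β) + N x * Real.exp (-2 * β)) := by
    intro x
    have e4 := Real.exp_pos (-4 * β)
    have e2 := Real.exp_pos (-2 * β)
    by_cases hx : x ∈ S
    · have h1 : metroRateP L β η (flipP L η x) = 1 := by
        rw [metroRateP_flipP hL, min_eq_left]
        apply Real.one_le_exp
        have := hS x hx
        rw [hcost, hN]
        nlinarith
      rw [h1, if_pos hx, one_mul]
      have := mul_nonneg (hN0 x) e2.le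
      linarith
    · rw [if_neg hx, zero_add]
      have hr : metroRateP L β η (flipP L η x) ≤
          Real.exp (-4 * β) + N x * Real.exp (-2 * β) := by
        rw [metroRateP_flipP hL, hcost]
        refine (min_le_right _ _).trans ?_
        rcases hS' x hx with h0 | h0
        · have : N x = 0 := h0
          rw [this, show -β * (4 - 2 * 0) = -4 * β by ring]; simp
        · have : N x = 1 := h0
          rw [this, show -β * (4 - 2 * 1) = -2 * β by ring]; linarith
      have hr0 := metroRateP_pos β η (flipP L η x)
      nlinarith [hdiff x]
  refine (Finset.sum_le_sum fun x _ => hterm x).trans (le_of_eq ?_)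
  rw [Finset.sum_add_distrib, ← Finset.mul_sum, Finset.sum_add_distrib, ← Finset.sum_mul, hNs,
    Finset.sum_ite_mem, Finset.univ_inter]
  simp [slow, pow_two]

lemma two_ne {L : ℕ} [NeZero L] (hL : 3 ≤ L) : (1 : Fin L) + 1 ≠ 0 := by
  intro h
  have := congrArg Fin.val h
  simp [Fin.val_add, Nat.mod_eq_of_lt (show 1 < L by omega),
    Nat.mod_eq_of_lt (show 2 < L by omega)] at this

lemma nbr_nonneg {L : ℕ} [NeZero L] (a y : Fin L) : 0 ≤ nbr a y := by
  unfold nbr; positivity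

lemma sum_nbr_eq {L : ℕ} [NeZero L] (a : Fin L) : ∑ y, nbr a y = 2 := by
  have := sum_nbr (fun _ => 1) a
  simp only [one_mul] at this
  rw [this]; norm_num

lemma nbr_add {L : ℕ} [NeZero L] (hL : 3 ≤ L) (a x : Fin L) :
    nbr a x + nbr a (x - 1) = if x = a then 2 else if x = a - 1 ∨ x = a + 1 then 1 else 0 := by
  have h1 : x - 1 = a ↔ x = a + 1 := sub_eq_iff_eq_add
  have h2 : x - 1 = a - 1 ↔ x = a := sub_left_inj
  have h3 : a ≠ a - 1 := fun h =>
    one_ne (L := L) (by omega) (by rwa [eq_comm, sub_eq_self] at h)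
  have h4 : a ≠ a + 1 := fun h => one_ne (L := L) (by omega) (by simpa using h)
  have h5 : a - 1 ≠ a + 1 := fun h => two_ne hL (by
    rw [sub_eq_iff_eq_add, add_assoc] at h; simpa using h)
  unfold nbr
  simp only [h1, h2]
  by_cases ha : x = a
  · subst ha; simp [h3, h4]; norm_num
  · by_cases hb : x = a - 1
    · subst hb; simp [h5, ha]
    · simp [ha, hb]

lemma single_not_mem {L : ℕ} [NeZero L] (hL : 2 ≤ L) {τ : ConfigP L} (hτ : τ ∈ GroundP L)
    (x : Fin L × Fin L) : flipP L τ x ∉ GroundP L := by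
  rw [mem_GroundP] at *
  intro h
  have := h x
  have h3 : ∀ a : Fin L, a ≠ a - 1 := fun a h =>
    one_ne hL (by rwa [eq_comm, sub_eq_self] at h)
  rw [flipP_eq_xr, plaqP_xr, hτ, plaqP_single hL] at this
  simp [nbr, h3] at this

/-- The generator at a single flip of a ground state. -/
lemma act_single_le {L : ℕ} [NeZero L] (hL : 3 ≤ L) {β : ℝ} (hβ : 0 ≤ β)
    {h : ConfigP L → ℝ} (hh : ∀ σ, |h σ| ≤ 1) {τ : ConfigP L} (hτ : τ ∈ GroundP L)
    (i j : Fin L) :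
    act L β h (flipP L τ (i, j)) ≤
      h τ + (h (flipP L (flipP L τ (i, j)) (i - 1, j)) +
        h (flipP L (flipP L τ (i, j)) (i + 1, j)) +
        h (flipP L (flipP L τ (i, j)) (i, j - 1)) +
        h (flipP L (flipP L τ (i, j)) (i, j + 1))) - 5 * h (flipP L τ (i, j)) +
        2 * slow L β := by
  have hη : ∀ y, plaqP L (flipP L τ (i, j)) y = 1 - 2 * (nbr i y.1 * nbr j y.2) := by
    intro y
    rw [flipP_eq_xr, plaqP_xr, (mem_GroundP τ).1 hτ, plaqP_single (by omega), one_mul]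
  have h3 : ∀ a : Fin L, a ≠ a - 1 := fun a h =>
    one_ne (L := L) (by omega) (by rwa [eq_comm, sub_eq_self] at h)
  have h4 : ∀ a : Fin L, a ≠ a + 1 := fun a h => one_ne (L := L) (by omega) (by simpa using h)
  have h5 : ∀ a : Fin L, a - 1 ≠ a + 1 := fun a h => two_ne hL (by
    rw [sub_eq_iff_eq_add, add_assoc] at h; simpa using h)
  refine (act_le_of_defects (by omega) hβ hh hη (nbr_nonneg i) (nbr_nonneg j) (sum_nbr_eq i)
    (sum_nbr_eq j) {(i, j), (i - 1, j), (i + 1, j), (i, j - 1), (i, j + 1)} ?_ ?_).trans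
    (le_of_eq ?_)
  · intro x hx
    rw [nbr_add hL, nbr_add hL]
    simp only [Finset.mem_insert, Finset.mem_singleton] at hx
    rcases hx with rfl | rfl | rfl | rfl | rfl <;> simp [(h3 _).symm, (h4 _).symm]
  · rintro ⟨a, b⟩ hx
    rw [nbr_add hL, nbr_add hL]
    simp only [Finset.mem_insert, Finset.mem_singleton, Prod.mk.injEq, not_or] at hx ⊢
    grind
  · rw [Finset.sum_insert, Finset.sum_insert, Finset.sum_insert, Finset.sum_insert,
      Finset.sum_singleton, flipP_flipP]
    · ring
    all_goals simp [h3, h4, h5, (h3 _).symm, (h4 _).symm]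

/-- The residue of `k` as an element of `Fin L`. -/
def res (L : ℕ) [NeZero L] (k : ℕ) : Fin L := Fin.ofNat L k

lemma res_zero {L : ℕ} [NeZero L] : res L 0 = 0 := by ext; simp [res]

lemma res_succ {L : ℕ} [NeZero L] (k : ℕ) : res L (k + 1) = res L k + 1 := by
  ext; simp [res, Fin.val_add]

lemma res_ne {L : ℕ} [NeZero L] {k : ℕ} (h0 : 0 < k) (hk : k < L) : res L k ≠ 0 := by
  intro h
  have := congrArg Fin.val h
  simp [res, Nat.mod_eq_of_lt hk] at this
  omega

/-- The cyclic interval of `k` sites starting at `i`. -/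
def arc {L : ℕ} [NeZero L] (i : Fin L) (k : ℕ) (x : Fin L) : Bool := decide ((x - i).val < k)

lemma arc_zero {L : ℕ} [NeZero L] (i x : Fin L) : arc i 0 x = false := by simp [arc]

lemma arc_full {L : ℕ} [NeZero L] (i x : Fin L) : arc i L x = true := by simp [arc]

lemma arc_succ {L : ℕ} [NeZero L] (i : Fin L) {k : ℕ} (hk : k < L) (x : Fin L) :
    arc i (k + 1) x = xor (arc i k x) (decide (x = i + res L k)) := by
  have h1 : x = i + res L k ↔ (x - i).val = k := by
    rw [add_comm, ← sub_eq_iff_eq_add, Fin.ext_iff]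
    simp [res, Nat.mod_eq_of_lt hk]
  simp only [arc, h1]
  by_cases h2 : (x - i).val = k
  · simp [h2]
  · have : (x - i).val < k + 1 ↔ (x - i).val < k := by omega
    simp [h2, this]

lemma arc_succ_left {L : ℕ} [NeZero L] (i : Fin L) {k : ℕ} (hk : k < L) (x : Fin L) :
    arc i (k + 1) x = xor (arc (i + 1) k x) (decide (x = i)) := by
  induction k with
  | zero => rw [arc_succ i hk, arc_zero, arc_zero, res_zero, add_zero]
  | succ k ih =>
    rw [arc_succ i hk, ih (by omega), arc_succ (i + 1) (by omega), res_succ,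
      show i + (res L k + 1) = i + 1 + res L k by abel]
    cases arc (i + 1) k x <;> simp [Bool.xor_comm]

lemma arc_bdry {L : ℕ} [NeZero L] (i : Fin L) {k : ℕ} (hk : k ≤ L) (y : Fin L) :
    xor (arc i k y) (arc i k (y + 1)) =
      xor (decide (y = i - 1)) (decide (y = i + res L k - 1)) := by
  induction k with
  | zero => simp [arc_zero, res_zero]
  | succ k ih =>
    have h1 : y + 1 = i + res L k ↔ y = i + res L k - 1 := eq_sub_iff_add_eq.symm
    have h2 : i + res L (k + 1) - 1 = i + res L k := by rw [res_succ]; abel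
    rw [arc_succ i (by omega), arc_succ i (by omega), h2]
    have := ih (by omega)
    simp only [h1]
    revert this
    generalize decide (y = i + res L k - 1) = p
    generalize decide (y = i + res L k) = q
    generalize decide (y = i - 1) = r
    cases arc i k y <;> cases arc i k (y + 1) <;> cases p <;> cases q <;> cases r <;> simp

/-- A horizontal bar of length `k`. -/
def bar {L : ℕ} [NeZero L] (i j : Fin L) (k : ℕ) : ConfigP L :=
  fun z => arc i k z.1 && decide (z.2 = j)

/-- Real indicator of the boundary of a cyclic interval. -/
def ends {L : ℕ} [NeZero L] (i : Fin L) (k : ℕ) (y : Fin L) : ℝ :=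
  (if y = i - 1 then 1 else 0) + (if y = i + res L k - 1 then 1 else 0)

lemma plaqP_bar {L : ℕ} [NeZero L] (hL : 2 ≤ L) (i j : Fin L) {k : ℕ} (h0 : 0 < k)
    (hk : k < L) (y : Fin L × Fin L) :
    plaqP L (bar i j k) y = 1 - 2 * (ends i k y.1 * nbr j y.2) := by
  have h := plaqP_and (arc i k) (fun b => decide (b = j)) y
  rw [bdry_point hL, arc_bdry i hk.le] at h
  have h1 : i - 1 ≠ i + res L k - 1 := by
    intro h
    rw [sub_left_inj] at h
    exact res_ne h0 hk (by simpa using h)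
  have h2 : (if xor (decide (y.1 = i - 1)) (decide (y.1 = i + res L k - 1)) then (1 : ℝ)
      else 0) = ends i k y.1 := by
    unfold ends
    by_cases ha : y.1 = i - 1
    · rw [ha]; simp [h1]
    · simp [ha]
  rw [h2] at h
  exact h

lemma bar_one {L : ℕ} [NeZero L] (hL : 0 < L) (i j : Fin L) : bar i j 1 = single (i, j) := by
  funext z
  have := arc_succ i hL z.1
  rw [arc_zero, res_zero, add_zero] at this
  rw [bar, this, single, Bool.false_xor, ← Bool.decide_and]
  exact decide_eq_decide.2 (Prod.ext_iff (x := z) (y := (i, j))).symm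

lemma bar_succ {L : ℕ} [NeZero L] (i j : Fin L) {k : ℕ} (hk : k < L) :
    bar i j (k + 1) = xr (bar i j k) (single (i + res L k, j)) := by
  funext z
  have : decide (z = (i + res L k, j)) = (decide (z.1 = i + res L k) && decide (z.2 = j)) := by
    rw [← Bool.decide_and]; exact decide_eq_decide.2 Prod.ext_iff
  simp only [bar, xr, single, arc_succ i hk, this]
  cases arc i k z.1 <;> cases decide (z.2 = j) <;> simp

lemma bar_succ_left {L : ℕ} [NeZero L] (i j : Fin L) {k : ℕ} (hk : k < L) :
    bar i j (k + 1) = xr (bar (i + 1) j k) (single (i, j)) := by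
  funext z
  have : decide (z = (i, j)) = (decide (z.1 = i) && decide (z.2 = j)) := by
    rw [← Bool.decide_and]; exact decide_eq_decide.2 Prod.ext_iff
  simp only [bar, xr, single, arc_succ_left i hk, this]
  cases arc (i + 1) k z.1 <;> cases decide (z.2 = j) <;> simp

lemma bar_not_mem {L : ℕ} [NeZero L] (hL : 2 ≤ L) {τ : ConfigP L} (hτ : τ ∈ GroundP L)
    (i j : Fin L) {k : ℕ} (h0 : 0 < k) (hk : k < L) : xr τ (bar i j k) ∉ GroundP L := by
  rw [mem_GroundP] at *
  intro h
  have := h (i - 1, j)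
  have h3 : ∀ a : Fin L, a ≠ a - 1 := fun a h =>
    one_ne hL (by rwa [eq_comm, sub_eq_self] at h)
  have h1 : i ≠ i + res L k := by
    intro h
    exact res_ne h0 hk (by simpa using h)
  rw [plaqP_xr, hτ, plaqP_bar hL i j h0 hk] at this
  simp [nbr, ends, h3, h1] at this

/-- The generator at a bar of length at least two and at most `L - 2`. -/
lemma act_bar_le {L : ℕ} [NeZero L] (hL : 4 ≤ L) {β : ℝ} (hβ : 0 ≤ β)
    {h : ConfigP L → ℝ} (hh : ∀ σ, |h σ| ≤ 1) {τ : ConfigP L} (hτ : τ ∈ GroundP L)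
    (i j : Fin L) {k : ℕ} (h2 : 2 ≤ k) (hk : k + 2 ≤ L) :
    act L β h (xr τ (bar i j k)) ≤
      h (xr τ (bar (i - 1) j (k + 1))) + h (xr τ (bar i j (k + 1))) +
        h (xr τ (bar (i + 1) j (k - 1))) + h (xr τ (bar i j (k - 1))) -
        4 * h (xr τ (bar i j k)) + 2 * slow L β := by
  have hη : ∀ y, plaqP L (xr τ (bar i j k)) y = 1 - 2 * (ends i k y.1 * nbr j y.2) := by
    intro y
    rw [plaqP_xr, (mem_GroundP τ).1 hτ, plaqP_bar (by omega) i j (by omega) (by omega), one_mul]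
  obtain ⟨m, rfl⟩ : ∃ m, k = m + 1 := ⟨k - 1, by omega⟩
  have f1 : flipP L (xr τ (bar i j (m + 1))) (i - 1, j) =
      xr τ (bar (i - 1) j (m + 1 + 1)) := by
    rw [flipP_eq_xr, xr_assoc, bar_succ_left (i - 1) j (k := m + 1) (by omega), sub_add_cancel]
  have f2 : flipP L (xr τ (bar i j (m + 1))) (i + res L (m + 1), j) =
      xr τ (bar i j (m + 1 + 1)) := by
    rw [flipP_eq_xr, xr_assoc, bar_succ i j (k := m + 1) (by omega)]
  have f3 : flipP L (xr τ (bar i j (m + 1))) (i, j) = xr τ (bar (i + 1) j m) := by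
    rw [flipP_eq_xr, xr_assoc, bar_succ_left i j (k := m) (by omega), xr_assoc, xr_self,
      xr_zeroC]
  have f4 : flipP L (xr τ (bar i j (m + 1))) (i + res L m, j) = xr τ (bar i j m) := by
    rw [flipP_eq_xr, xr_assoc, bar_succ i j (k := m) (by omega), xr_assoc, xr_self,
      xr_zeroC]
  have hends : ∀ x, ends i (m + 1) x + ends i (m + 1) (x - 1) =
      (if x = i - 1 then 1 else 0) + (if x = i + res L m then 1 else 0) +
      ((if x = i then 1 else 0) + (if x = i + res L (m + 1) then 1 else 0)) := by
    intro x
    have e1 : i + res L (m + 1) - 1 = i + res L m := by rw [res_succ]; abel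
    have e2 : x - 1 = i - 1 ↔ x = i := sub_left_inj
    have e3 : x - 1 = i + res L m ↔ x = i + res L (m + 1) := by
      rw [sub_eq_iff_eq_add, res_succ, add_assoc]
    simp only [ends, e1, e2, e3]
  have d1 : i - 1 ≠ i := fun h => one_ne (L := L) (by omega) (by rwa [sub_eq_self] at h)
  have d2 : i - 1 ≠ i + res L m := by
    intro h
    rw [sub_eq_iff_eq_add, add_assoc, ← res_succ] at h
    exact res_ne (L := L) (k := m + 1) (by omega) (by omega) (by simpa using h)
  have d3 : i - 1 ≠ i + res L (m + 1) := by
    intro h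
    rw [sub_eq_iff_eq_add, add_assoc, ← res_succ] at h
    exact res_ne (L := L) (k := m + 1 + 1) (by omega) (by omega) (by simpa using h)
  have d4 : i ≠ i + res L m := by
    intro h
    exact res_ne (L := L) (k := m) (by omega) (by omega) (by simpa using h)
  have d5 : i ≠ i + res L (m + 1) := by
    intro h
    exact res_ne (L := L) (k := m + 1) (by omega) (by omega) (by simpa using h)
  have d6 : i + res L m ≠ i + res L (m + 1) := by
    intro h
    rw [res_succ] at h
    exact one_ne (L := L) (by omega) (by simpa using h)
  have hne0 : ∀ x, 0 ≤ ends i (m + 1) x := fun x => by unfold ends; positivity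
  refine (act_le_of_defects (by omega) hβ hh hη hne0 (nbr_nonneg j) ?_
    (sum_nbr_eq j) {(i - 1, j), (i + res L (m + 1), j), (i, j), (i + res L m, j)} ?_ ?_).trans
    (le_of_eq ?_)
  · simp [ends, Finset.sum_add_distrib]; norm_num
  · intro x hx
    rw [hends, nbr_add (by omega)]
    simp only [Finset.mem_insert, Finset.mem_singleton] at hx
    rcases hx with rfl | rfl | rfl | rfl <;>
      simp [d1, d2, d3, d4, d5, d6, d1.symm, d2.symm, d3.symm, d4.symm, d5.symm, d6.symm]
  · rintro ⟨a, b⟩ hx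
    rw [hends, nbr_add (by omega)]
    simp only [Finset.mem_insert, Finset.mem_singleton, Prod.mk.injEq, not_or] at hx ⊢
    grind
  · rw [Finset.sum_insert, Finset.sum_insert, Finset.sum_insert, Finset.sum_singleton,
      f1, f2, f3, f4, Nat.add_sub_cancel]
    · ring
    all_goals simp only [Finset.mem_insert, Finset.mem_singleton, Prod.mk.injEq]; grind

/-! ### Comparison around one ground state -/

/-- The lines of the torus: the second coordinate is fixed if `d` holds, else the first. -/
def ln {L : ℕ} (d : Bool) (j : Fin L) : ConfigP L :=
  fun z => if d then decide (z.2 = j) else decide (z.1 = j)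

lemma swapC_ln {L : ℕ} (d : Bool) (j : Fin L) : swapC (ln d j) = ln (!d) j := by
  funext z; cases d <;> simp [swapC, ln]

lemma swapC_single {L : ℕ} (a b : Fin L) : swapC (single (a, b)) = single (b, a) := by
  funext z
  simp only [swapC, single]
  refine decide_eq_decide.2 ?_
  rw [Prod.ext_iff, Prod.ext_iff]; simp [and_comm]

lemma bar_full {L : ℕ} [NeZero L] (i j : Fin L) : bar i j L = ln true j := by
  funext z; simp [bar, arc_full, ln]

lemma bar_pred {L : ℕ} [NeZero L] (i j : Fin L) (τ : ConfigP L) :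
    xr τ (bar i j (L - 1)) = flipP L (xr τ (ln true j)) (i + res L (L - 1), j) := by
  have hL : 0 < L := Nat.pos_of_ne_zero (NeZero.ne L)
  have h := bar_succ i j (k := L - 1) (by omega)
  rw [Nat.sub_add_cancel hL, bar_full] at h
  rw [h, flipP_eq_xr, xr_assoc, xr_assoc, xr_self, xr_zeroC]

lemma ln_mem {L : ℕ} [NeZero L] (d : Bool) (j : Fin L) : ln d j ∈ GroundP L := by
  have h : ∀ j : Fin L, (ln true j : ConfigP L) ∈ GroundP L := by
    intro j
    rw [mem_GroundP]
    intro y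
    have := plaqP_and (fun _ => true) (fun b => decide (b = j)) y
    have e : (ln true j : ConfigP L) = fun z => decide (z.2 = j) := by funext z; simp [ln]
    rw [e]
    simpa using this
  cases d
  · have := swapC_mem (h j)
    rwa [swapC_ln] at this
  · exact h j

/-- The barrier function bounding a harmonic function along the bars of length `k`. -/
def prof (L : ℕ) (S ε : ℝ) (k : ℕ) : ℝ :=
  S * ((k + 3) / (L + 2)) + ε * (L + k * (L - k) / 4)

lemma prof_one {L : ℕ} (S ε : ℝ) : prof L S ε 1 = S * (4 / (L + 2)) + ε * (L + (L - 1) / 4) := by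
  unfold prof; push_cast; ring

lemma prof_two {L : ℕ} (S ε : ℝ) : prof L S ε 2 = S * (5 / (L + 2)) + ε * (L + (L - 2) / 2) := by
  unfold prof; push_cast; ring

lemma prof_second_diff {L : ℕ} (S ε : ℝ) (m : ℕ) :
    prof L S ε (m + 2) + prof L S ε m - 2 * prof L S ε (m + 1) = -(ε / 2) := by
  unfold prof; push_cast; ring

lemma le_prof_pred {L : ℕ} (hL : 1 ≤ L) (S : ℝ) {ε : ℝ} (hε : 0 ≤ ε) :
    S ≤ prof L S ε (L - 1) := by
  have h1 : ((L : ℝ) - 1 + 3) / (L + 2) = 1 := by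
    rw [div_eq_one_iff_eq (by positivity)]; ring
  have h2 : (0 : ℝ) ≤ L - 1 := by
    have : (1 : ℝ) ≤ L := by exact_mod_cast hL
    linarith
  unfold prof
  rw [Nat.cast_sub hL, Nat.cast_one, h1]
  have : 0 ≤ ε * ((L : ℝ) + ((L : ℝ) - 1) * (L - ((L : ℝ) - 1)) / 4) := by
    apply mul_nonneg hε
    nlinarith
  linarith

/-- No interior maximum of the difference with the barrier occurs at a bar. -/
lemma no_max_at_bar {L : ℕ} [NeZero L] (hL : 4 ≤ L) {β : ℝ} (hβ : 0 ≤ β)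
    {h : ConfigP L → ℝ} (hh : ∀ σ, |h σ| ≤ 1) (hharm : ∀ σ ∉ GroundP L, act L β h σ = 0)
    {τ : ConfigP L} (hτ : τ ∈ GroundP L) (h0 : h τ ≤ 0) {S M : ℝ} (hM : 0 < M)
    (hS : ∀ i j, h (xr τ (bar i j (L - 1))) ≤ S)
    (hA : ∀ i j k, 1 ≤ k → k + 2 ≤ L →
      h (xr τ (bar i j k)) ≤ prof L S (5 * slow L β) k + M)
    (hB : ∀ i j k, 1 ≤ k → k + 2 ≤ L →
      h (xr τ (swapC (bar i j k))) ≤ prof L S (5 * slow L β) k + M)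
    (i j : Fin L) {k : ℕ} (hk1 : 1 ≤ k) (hk : k + 2 ≤ L) :
    h (xr τ (bar i j k)) ≠ prof L S (5 * slow L β) k + M := by
  intro heq
  have hs := slow_pos L β
  have h0' := hharm _ (bar_not_mem (by omega) hτ i j (by omega : 0 < k) (by omega))
  have hLr : (4 : ℝ) ≤ L := by exact_mod_cast hL
  rcases Nat.lt_or_ge k 2 with hk2 | hk2
  · obtain rfl : k = 1 := by omega
    have b2 : ∀ a b : Fin L, bar a b 2 = xr (single (a, b)) (single (a + 1, b)) := by
      intro a b
      have := bar_succ a b (k := 1) (by omega)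
      rwa [bar_one (by omega), show res L 1 = 1 by rw [res_succ, res_zero, zero_add]] at this
    have b2' : ∀ a b : Fin L, bar (a - 1) b 2 = xr (single (a, b)) (single (a - 1, b)) := by
      intro a b
      rw [b2, sub_add_cancel, xr_comm]
    rw [bar_one (by omega), ← flipP_eq_xr] at h0' heq
    have key := act_single_le (by omega) hβ hh hτ i j
    have e1 : flipP L (flipP L τ (i, j)) (i - 1, j) = xr τ (bar (i - 1) j 2) := by
      rw [flipP_eq_xr, flipP_eq_xr, xr_assoc, b2']
    have e2 : flipP L (flipP L τ (i, j)) (i + 1, j) = xr τ (bar i j 2) := by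
      rw [flipP_eq_xr, flipP_eq_xr, xr_assoc, b2]
    have e3 : flipP L (flipP L τ (i, j)) (i, j - 1) = xr τ (swapC (bar (j - 1) i 2)) := by
      rw [flipP_eq_xr, flipP_eq_xr, xr_assoc, b2', swapC_xr, swapC_single, swapC_single]
    have e4 : flipP L (flipP L τ (i, j)) (i, j + 1) = xr τ (swapC (bar j i 2)) := by
      rw [flipP_eq_xr, flipP_eq_xr, xr_assoc, b2, swapC_xr, swapC_single, swapC_single]
    rw [h0', e1, e2, e3, e4, heq] at key
    have a1 := hA (i - 1) j 2 (by omega) (by omega)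
    have a2 := hA i j 2 (by omega) (by omega)
    have a3 := hB (j - 1) i 2 (by omega) (by omega)
    have a4 := hB j i 2 (by omega) (by omega)
    rw [prof_two] at a1 a2 a3 a4
    rw [prof_one] at key
    have e5 : S * (5 / ((L : ℝ) + 2)) * 4 = S * (4 / (L + 2)) * 5 := by ring
    nlinarith
  · have key := act_bar_le hL hβ hh hτ i j hk2 hk
    rw [h0', heq] at key
    have hup : ∀ a, h (xr τ (bar a j (k + 1))) ≤ prof L S (5 * slow L β) (k + 1) + M := by
      intro a
      rcases Nat.lt_or_ge (k + 2) L with h3 | h3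
      · exact hA a j (k + 1) (by omega) (by omega)
      · have : k + 1 = L - 1 := by omega
        rw [this]
        linarith [hS a j, le_prof_pred (L := L) (by omega) S
          (show 0 ≤ 5 * slow L β by linarith)]
    obtain ⟨m, rfl⟩ : ∃ m, k = m + 1 := ⟨k - 1, by omega⟩
    rw [Nat.add_sub_cancel] at key
    have hd := prof_second_diff (L := L) S (5 * slow L β) m
    linarith [hup i, hup (i - 1), hA i j m (by omega) (by omega),
      hA (i + 1) j m (by omega) (by omega)]

/-- A bounded harmonic function, nonpositive at a ground state and at most `S` next to the
neighbouring ground states, is of order `S / L` next to that ground state. -/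
lemma le_near_ground {L : ℕ} [NeZero L] (hL : 4 ≤ L) {β : ℝ} (hβ : 0 ≤ β)
    {h : ConfigP L → ℝ} (hh : ∀ σ, |h σ| ≤ 1) (hharm : ∀ σ ∉ GroundP L, act L β h σ = 0)
    {τ : ConfigP L} (hτ : τ ∈ GroundP L) (h0 : h τ ≤ 0) {S : ℝ}
    (hS : ∀ d j x, h (flipP L (xr τ (ln d j)) x) ≤ S) (x : Fin L × Fin L) :
    h (flipP L τ x) ≤ S * (4 / (L + 2)) + 10 * L * slow L β := by
  have hs := slow_pos L β
  set F : ℕ → ℝ := prof L S (5 * slow L β) with hF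
  have hS1 : ∀ i j, h (xr τ (bar i j (L - 1))) ≤ S := fun i j => by
    rw [bar_pred]; exact hS _ _ _
  have hS2 : ∀ i j, h (xr τ (swapC (bar i j (L - 1)))) ≤ S := fun i j => by
    have := congrArg swapC (bar_pred i j (swapC τ))
    rw [swapC_xr, swapC_swapC, swapC_flipP, swapC_xr, swapC_swapC, swapC_ln] at this
    rw [this]; exact hS _ _ _
  have hswap : ∀ σ, act L β (h ∘ swapC) σ = act L β h (swapC σ) := fun σ =>
    (isSymm_swapC L).act_comp h σ
  let U : Bool × Fin L × Fin L × ℕ → ℝ := fun p =>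
    h (xr τ (if p.1 then bar p.2.1 p.2.2.1 p.2.2.2 else swapC (bar p.2.1 p.2.2.1 p.2.2.2))) -
      F p.2.2.2
  let D : Finset (Bool × Fin L × Fin L × ℕ) :=
    Finset.univ ×ˢ Finset.univ ×ˢ Finset.univ ×ˢ Finset.Icc 1 (L - 2)
  have hD : (true, x.1, x.2, 1) ∈ D := by simp [D]; omega
  obtain ⟨⟨d, i, j, k⟩, hm, hmax⟩ := Finset.exists_max_image D U ⟨_, hD⟩
  have hk : 1 ≤ k ∧ k ≤ L - 2 := by simpa [D] using hm
  have hA : ∀ a b l, 1 ≤ l → l + 2 ≤ L → h (xr τ (bar a b l)) ≤ F l + U (d, i, j, k) := by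
    intro a b l h1 h2
    have := hmax (true, a, b, l) (by simp [D]; omega)
    simp only [U, if_true] at this ⊢
    linarith
  have hB : ∀ a b l, 1 ≤ l → l + 2 ≤ L →
      h (xr τ (swapC (bar a b l))) ≤ F l + U (d, i, j, k) := by
    intro a b l h1 h2
    have := hmax (false, a, b, l) (by simp [D]; omega)
    simp only [U, if_false, Bool.false_eq_true] at this ⊢
    linarith
  have hM : U (d, i, j, k) ≤ 0 := by
    by_contra! hM
    cases d with
    | true =>
      refine no_max_at_bar hL hβ hh hharm hτ h0 hM hS1 hA hB i j hk.1 (by omega) ?_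
      simp only [U, if_true, hF]; ring
    | false =>
      have hsx : ∀ σ A : ConfigP L, (h ∘ swapC) (xr (swapC σ) A) = h (xr σ (swapC A)) := by
        intro σ A; rw [Function.comp, swapC_xr, swapC_swapC]
      refine no_max_at_bar (h := h ∘ swapC) (τ := swapC τ) hL hβ (fun σ => hh _)
        (fun σ hσ => ?_) (swapC_mem hτ) ?_ hM (S := S) (fun a b => ?_) (fun a b l h1 h2 => ?_)
        (fun a b l h1 h2 => ?_) i j hk.1 (by omega) ?_
      · rw [hswap]
        exact hharm _ fun hc => hσ (by simpa [swapC_swapC] using swapC_mem hc)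
      · rw [Function.comp, swapC_swapC]; exact h0
      · rw [hsx]; exact hS2 a b
      · rw [hsx]; exact hB a b l h1 h2
      · rw [hsx, swapC_swapC]; exact hA a b l h1 h2
      · rw [hsx]
        simp only [U, hF]; simp
  have h1 := hA x.1 x.2 1 le_rfl (by omega)
  rw [bar_one (by omega), ← flipP_eq_xr, hF, prof_one] at h1
  have hLr : (4 : ℝ) ≤ L := by exact_mod_cast hL
  have h2 : 5 * slow L β * ((L : ℝ) + (L - 1) / 4) ≤ 10 * L * slow L β := by nlinarith
  have h3 : flipP L τ x = flipP L τ (x.1, x.2) := rfl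
  linarith [h3 ▸ h1]

/-! ### Rates of the trace chain -/

/-- The standing assumptions relating the side length and the inverse temperature. -/
structure Crit (L : ℕ) (β : ℝ) : Prop where
  big : 100 ≤ L
  nonneg : 0 ≤ β
  upper : Real.exp (-4 * β) ≤ 1 / (L : ℝ) ^ 8
  lower : 1 / (256 * (L : ℝ) ^ 8) ≤ Real.exp (-4 * β)
  slow_le : slow L β ≤ 17 / (L : ℝ) ^ 4

lemma Crit.hundred_le {L : ℕ} {β : ℝ} (hc : Crit L β) : (100 : ℝ) ≤ L := by exact_mod_cast hc.big

lemma IsExt.abs_le_one {L : ℕ} {β : ℝ} {f h : ConfigP L → ℝ} (H : IsExt L β f h)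
    (hf0 : ∀ σ, 0 ≤ f σ) (hf1 : ∀ σ, f σ ≤ 1) (σ : ConfigP L) : |h σ| ≤ 1 :=
  abs_le.2 ⟨by linarith [H.ge (c := 0) (fun σ _ => hf0 σ) σ], H.le (fun σ _ => hf1 σ) σ⟩

lemma IsExt.near {L : ℕ} [NeZero L] {β : ℝ} (hc : Crit L β) {f h : ConfigP L → ℝ}
    (H : IsExt L β f h) (hf0 : ∀ σ, 0 ≤ f σ) (hf1 : ∀ σ, f σ ≤ 1) {τ : ConfigP L}
    (hτ : τ ∈ GroundP L) (h0 : f τ = 0) {S : ℝ} (hS0 : 0 ≤ S)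
    (hS : ∀ d j x, h (flipP L (xr τ (ln d j)) x) ≤ S) (x : Fin L × Fin L) :
    h (flipP L τ x) ≤ 4 * S / L + 170 / (L : ℝ) ^ 3 := by
  have hL := hc.hundred_le
  have h1 := le_near_ground (by linarith [hc.big]) hc.nonneg (H.abs_le_one hf0 hf1) H.harm hτ
    (by rw [H.eq_on τ hτ, h0]) hS x
  have h2 : S * (4 / ((L : ℝ) + 2)) ≤ 4 * S / L := by
    rw [mul_div_assoc', mul_comm S 4]
    exact div_le_div_of_nonneg_left (by linarith) (by linarith) (by linarith)
  have h3 : 10 * (L : ℝ) * slow L β ≤ 170 / (L : ℝ) ^ 3 := by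
    calc 10 * (L : ℝ) * slow L β ≤ 10 * (L : ℝ) * (17 / (L : ℝ) ^ 4) :=
          mul_le_mul_of_nonneg_left hc.slow_le (by linarith)
      _ = 170 / (L : ℝ) ^ 3 := by field_simp; norm_num
  linarith

lemma IsExt.near_of_zero {L : ℕ} [NeZero L] {β : ℝ} (hc : Crit L β) {f h : ConfigP L → ℝ}
    (H : IsExt L β f h) (hf0 : ∀ σ, 0 ≤ f σ) (hf1 : ∀ σ, f σ ≤ 1) {τ : ConfigP L}
    (hτ : τ ∈ GroundP L) (h0 : f τ = 0) (x : Fin L × Fin L) :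
    h (flipP L τ x) ≤ 5 / L := by
  have hL := hc.hundred_le
  refine (H.near hc hf0 hf1 hτ h0 zero_le_one
    (fun d j x => H.le (fun σ _ => hf1 σ) _) x).trans ?_
  have : (170 : ℝ) / (L : ℝ) ^ 3 ≤ 1 / L := by
    rw [div_le_div_iff₀ (by positivity) (by positivity)]
    nlinarith [mul_le_mul hL hL (by norm_num) (by linarith)]
  calc 4 * 1 / (L : ℝ) + 170 / (L : ℝ) ^ 3 ≤ 4 * 1 / (L : ℝ) + 1 / L := by linarith
    _ = 5 / L := by ring

lemma IsExt.near_of_zero_one {L : ℕ} [NeZero L] {β : ℝ} (hc : Crit L β) {f h : ConfigP L → ℝ}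
    (H : IsExt L β f h) (hf0 : ∀ σ, 0 ≤ f σ) (hf1 : ∀ σ, f σ ≤ 1) {τ : ConfigP L}
    (hτ : τ ∈ GroundP L) (h0 : f τ = 0) (h1 : ∀ d j, f (xr τ (ln d j)) = 0)
    (x : Fin L × Fin L) : h (flipP L τ x) ≤ 22 / (L : ℝ) ^ 2 := by
  have hL := hc.hundred_le
  refine (H.near hc hf0 hf1 hτ h0 (by positivity : (0 : ℝ) ≤ 5 / L) (fun d j x =>
    H.near_of_zero hc hf0 hf1 (xr_mem hτ (ln_mem d j)) (h1 d j) x) x).trans ?_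
  have : (170 : ℝ) / (L : ℝ) ^ 3 ≤ 2 / (L : ℝ) ^ 2 := by
    rw [div_le_div_iff₀ (by positivity) (by positivity)]
    have : (0 : ℝ) ≤ (L : ℝ) ^ 2 := by positivity
    nlinarith [mul_nonneg this (by linarith : (0 : ℝ) ≤ L - 100)]
  calc 4 * (5 / (L : ℝ)) / L + 170 / (L : ℝ) ^ 3 ≤ 4 * (5 / (L : ℝ)) / L + 2 / (L : ℝ) ^ 2 := by
        linarith
    _ = 22 / (L : ℝ) ^ 2 := by field_simp; norm_num

lemma IsExt.near_of_zero_two {L : ℕ} [NeZero L] {β : ℝ} (hc : Crit L β) {f h : ConfigP L → ℝ}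
    (H : IsExt L β f h) (hf0 : ∀ σ, 0 ≤ f σ) (hf1 : ∀ σ, f σ ≤ 1) {τ : ConfigP L}
    (hτ : τ ∈ GroundP L) (h0 : f τ = 0) (h1 : ∀ d j, f (xr τ (ln d j)) = 0)
    (h2 : ∀ d j d' j', f (xr (xr τ (ln d j)) (ln d' j')) = 0)
    (x : Fin L × Fin L) : h (flipP L τ x) ≤ 258 / (L : ℝ) ^ 3 := by
  have hL := hc.hundred_le
  refine (H.near hc hf0 hf1 hτ h0 (by positivity : (0 : ℝ) ≤ 22 / (L : ℝ) ^ 2) (fun d j x =>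
    H.near_of_zero_one hc hf0 hf1 (xr_mem hτ (ln_mem d j)) (h1 d j) (h2 d j) x) x).trans
      (le_of_eq ?_)
  field_simp; norm_num

lemma act_zeroC {L : ℕ} [NeZero L] {β : ℝ} (hc : Crit L β) {h : ConfigP L → ℝ}
    (h0 : h (zeroC L) = 0) :
    act L β h (zeroC L) = Real.exp (-4 * β) * ∑ x, h (flipP L (zeroC L) x) := by
  have h2 : 2 ≤ L := by linarith [hc.big]
  rw [act, Finset.mul_sum]
  refine Finset.sum_congr rfl fun x _ => ?_
  rw [metroRateP_flipP h2, cost_ground (zeroC_mem L), h0, sub_zero, min_eq_right,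
    show -β * 4 = -4 * β by ring]
  exact Real.exp_le_one_iff.2 (by linarith [hc.nonneg])

lemma act_zeroC_le {L : ℕ} [NeZero L] {β : ℝ} (hc : Crit L β) {h : ConfigP L → ℝ}
    (h0 : h (zeroC L) = 0) {c : ℝ} (hc0 : 0 ≤ c) (hle : ∀ x, h (flipP L (zeroC L) x) ≤ c) :
    act L β h (zeroC L) ≤ c / (L : ℝ) ^ 6 := by
  have hL := hc.hundred_le
  rw [act_zeroC hc h0]
  have h1 : ∑ x, h (flipP L (zeroC L) x) ≤ (L : ℝ) ^ 2 * c := by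
    refine (Finset.sum_le_sum fun x _ => hle x).trans (le_of_eq ?_)
    simp [pow_two]
  calc _ ≤ Real.exp (-4 * β) * ((L : ℝ) ^ 2 * c) :=
        mul_le_mul_of_nonneg_left h1 (Real.exp_pos _).le
    _ ≤ 1 / (L : ℝ) ^ 8 * ((L : ℝ) ^ 2 * c) :=
        mul_le_mul_of_nonneg_right hc.upper (by positivity)
    _ = c / (L : ℝ) ^ 6 := by field_simp

lemma ind_nonneg {L : ℕ} (τ σ : ConfigP L) : 0 ≤ ind τ σ := by
  unfold ind; positivity

lemma ind_le_one {L : ℕ} (τ σ : ConfigP L) : ind τ σ ≤ 1 := by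
  unfold ind; split_ifs <;> norm_num

lemma ind_of_ne {L : ℕ} {τ σ : ConfigP L} (h : σ ≠ τ) : ind τ σ = 0 := if_neg h

lemma rate_nonneg {L : ℕ} [NeZero L] {β : ℝ} (hc : Crit L β) {A : ConfigP L}
    (hA : A ≠ zeroC L) : 0 ≤ rate L β A := by
  have H := isExt_hit L β A
  rw [rate, act_zeroC hc (by rw [H.eq_on _ (zeroC_mem L), ind_of_ne hA.symm])]
  exact mul_nonneg (Real.exp_pos _).le
    (Finset.sum_nonneg fun x _ => H.ge (fun σ _ => ind_nonneg A σ) _)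

/-- Ground states differing in more than two lines. -/
lemma rate_far {L : ℕ} [NeZero L] {β : ℝ} (hc : Crit L β) {A : ConfigP L}
    (h0 : A ≠ zeroC L) (h1 : ∀ d j, A ≠ ln d j)
    (h2 : ∀ d j d' j', A ≠ xr (ln d j) (ln d' j')) :
    rate L β A ≤ 258 / (L : ℝ) ^ 9 := by
  have H := isExt_hit L β A
  have hL := hc.hundred_le
  have key := act_zeroC_le hc (by rw [H.eq_on _ (zeroC_mem L), ind_of_ne h0.symm])
    (by positivity) (H.near_of_zero_two hc (ind_nonneg A) (ind_le_one A) (zeroC_mem L)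
      (ind_of_ne h0.symm) (fun d j => ind_of_ne (by rw [zeroC_xr]; exact (h1 d j).symm))
      (fun d j d' j' => ind_of_ne (by rw [zeroC_xr]; exact (h2 d j d' j').symm)))
  rw [rate]
  refine key.trans (le_of_eq ?_)
  field_simp

lemma shiftC_ln_true {L : ℕ} [NeZero L] (t j : Fin L) :
    shiftC t (ln true j) = ln true (j + t) := by
  funext z; simp [shiftC, ln, sub_eq_iff_eq_add]

lemma shiftC_ln_false {L : ℕ} [NeZero L] (t j : Fin L) :
    shiftC t (ln false j) = ln false j := by
  funext z; simp [shiftC, ln]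

lemma shiftC_xr {L : ℕ} [NeZero L] (t : Fin L) (A B : ConfigP L) :
    shiftC t (xr A B) = xr (shiftC t A) (shiftC t B) := rfl

lemma shiftC_neg_shiftC {L : ℕ} [NeZero L] (t : Fin L) (A : ConfigP L) :
    shiftC (-t) (shiftC t A) = A := by
  funext z; simp [shiftC]

/-- A translate of a pair of lines coincides with at most two translates. -/
lemma shift_pair {L : ℕ} [NeZero L] (hL : 2 ≤ L) {j j' : Fin L} {d' : Bool}
    (h0 : xr (ln true j) (ln d' j') ≠ zeroC L) {t t' : Fin L}
    (h : shiftC t (xr (ln true j) (ln d' j')) = shiftC t' (xr (ln true j) (ln d' j'))) :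
    t = t' ∨ t = t' + j' - j := by
  cases d' with
  | true =>
    have hj : j ≠ j' := by rintro rfl; exact h0 (xr_self _)
    have := congrFun h (0, j + t)
    simp only [shiftC_xr, shiftC_ln_true, xr, ln, if_true] at this
    have e1 : j + t = j' + t ↔ j = j' := add_left_inj t
    have e2 : j + t = j + t' ↔ t = t' := add_right_inj j
    simp only [e1, e2, hj, decide_false, decide_true, Bool.xor_false] at this
    by_cases ht : t = t'
    · exact Or.inl ht
    · right
      simp only [ht, decide_false, Bool.false_xor] at this
      have h3 := of_decide_eq_true this.symm
      rw [eq_sub_iff_add_eq, add_comm, h3, add_comm]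
  | false =>
    left
    have : Nontrivial (Fin L) := ⟨⟨1, 0, one_ne hL⟩⟩
    obtain ⟨a, ha⟩ := exists_ne j'
    have := congrFun h (a, j + t)
    simp only [shiftC_xr, shiftC_ln_true, shiftC_ln_false, xr, ln, if_true] at this
    simpa [ha] using this

/-- Ground states differing in two lines, the first one horizontal. -/
lemma rate_pair_true {L : ℕ} [NeZero L] {β : ℝ} (hc : Crit L β) {j j' : Fin L} {d' : Bool}
    (h0 : xr (ln true j) (ln d' j') ≠ zeroC L)
    (h1 : ∀ d i, xr (ln true j) (ln d' j') ≠ ln d i) :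
    rate L β (xr (ln true j) (ln d' j')) ≤ 258 / (L : ℝ) ^ 9 := by
  have hL := hc.hundred_le
  set A := xr (ln true j) (ln d' j') with hA
  have H := IsExt.sum (Finset.univ : Finset (Fin L)) (fun _ => (1 / 2 : ℝ))
    (fun t _ => isExt_hit L β (shiftC t A))
  set f : ConfigP L → ℝ := fun η => ∑ t : Fin L, 1 / 2 * ind (shiftC t A) η with hf
  have hf0 : ∀ σ, 0 ≤ f σ := fun σ =>
    Finset.sum_nonneg fun t _ => mul_nonneg (by norm_num) (ind_nonneg _ _)
  have hf1 : ∀ σ, f σ ≤ 1 := by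
    intro σ
    by_cases hσ : ∃ t', σ = shiftC t' A
    · obtain ⟨t', rfl⟩ := hσ
      have hsub : ∀ t ∈ (Finset.univ : Finset (Fin L)), t ∉ ({t', t' + j' - j} : Finset _) →
          1 / 2 * ind (shiftC t A) (shiftC t' A) = 0 := by
        intro t _ ht
        rw [ind_of_ne, mul_zero]
        intro h
        apply ht
        simpa using shift_pair (by linarith [hc.big]) h0 h.symm
      simp only [hf]
      rw [← Finset.sum_subset (Finset.subset_univ _) hsub]
      calc ∑ t ∈ ({t', t' + j' - j} : Finset (Fin L)), 1 / 2 * ind (shiftC t A) (shiftC t' A)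
          ≤ ∑ _t ∈ ({t', t' + j' - j} : Finset (Fin L)), (1 / 2 : ℝ) :=
            Finset.sum_le_sum fun t _ => by linarith [ind_le_one (shiftC t A) (shiftC t' A)]
        _ ≤ 1 := by
          rw [Finset.sum_const, nsmul_eq_mul]
          have : ((({t', t' + j' - j} : Finset (Fin L)).card : ℕ) : ℝ) ≤ 2 := by
            exact_mod_cast Finset.card_le_two
          linarith
    · push Not at hσ
      simp only [hf]
      rw [Finset.sum_eq_zero fun t _ => by rw [ind_of_ne (hσ t), mul_zero]]
      norm_num
  have hz : ∀ B, (∀ t, B ≠ shiftC t A) → f B = 0 := fun B hB =>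
    Finset.sum_eq_zero fun t _ => by rw [ind_of_ne (hB t), mul_zero]
  have hf2 : f (zeroC L) = 0 := hz _ fun t ht => h0 (by
    have := congrArg (shiftC (-t)) ht
    rw [shiftC_neg_shiftC] at this
    rw [← this]; rfl)
  have hf3 : ∀ d i, f (xr (zeroC L) (ln d i)) = 0 := fun d i => hz _ fun t ht => by
    have := congrArg (shiftC (-t)) ht
    rw [shiftC_neg_shiftC, zeroC_xr] at this
    cases d
    · rw [shiftC_ln_false] at this; exact h1 _ _ this.symm
    · rw [shiftC_ln_true] at this; exact h1 _ _ this.symm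
  have key := act_zeroC_le (h := fun η => ∑ i : Fin L, 1 / 2 * hit L β (shiftC i A) η)
    (c := 22 / (L : ℝ) ^ 2) hc ((H.eq_on _ (zeroC_mem L)).trans hf2) (by positivity)
    (H.near_of_zero_one hc hf0 hf1 (zeroC_mem L) hf2 hf3)
  rw [act_lin] at key
  have hr : ∀ t : Fin L, act L β (hit L β (shiftC t A)) (zeroC L) = rate L β A := fun t =>
    rate_shiftC β t A
  simp only [hr] at key
  rw [Finset.sum_const, Finset.card_univ, Fintype.card_fin, nsmul_eq_mul] at key
  have h3 : rate L β A ≤ 44 / (L : ℝ) ^ 9 := by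
    rw [le_div_iff₀ (by positivity)]
    rw [div_div, le_div_iff₀ (by positivity)] at key
    nlinarith
  refine h3.trans ?_
  gcongr
  norm_num

lemma rate_pair {L : ℕ} [NeZero L] {β : ℝ} (hc : Crit L β) {j j' : Fin L} {d d' : Bool}
    (h0 : xr (ln d j) (ln d' j') ≠ zeroC L)
    (h1 : ∀ e i, xr (ln d j) (ln d' j') ≠ ln e i) :
    rate L β (xr (ln d j) (ln d' j')) ≤ 258 / (L : ℝ) ^ 9 := by
  cases d with
  | true => exact rate_pair_true hc h0 h1
  | false =>
    rw [← rate_swapC, swapC_xr, swapC_ln, swapC_ln]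
    have e : xr (ln (!false) j) (ln (!d') j') = swapC (xr (ln false j) (ln d' j')) := by
      rw [swapC_xr, swapC_ln, swapC_ln]
    refine rate_pair_true hc (fun h => h0 ?_) (fun b i h => h1 (!b) i ?_)
    · have := congrArg swapC (e.symm.trans h)
      rw [swapC_swapC] at this
      rw [this]; rfl
    · have := congrArg swapC (e.symm.trans h)
      rwa [swapC_swapC, swapC_ln] at this

lemma rate_not_line {L : ℕ} [NeZero L] {β : ℝ} (hc : Crit L β) {A : ConfigP L}
    (h0 : A ≠ zeroC L) (h1 : ∀ d j, A ≠ ln d j) : rate L β A ≤ 258 / (L : ℝ) ^ 9 := by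
  by_cases h2 : ∃ d j d' j', A = xr (ln d j) (ln d' j')
  · obtain ⟨d, j, d', j', rfl⟩ := h2
    exact rate_pair hc h0 h1
  · push Not at h2
    exact rate_far hc h0 h1 h2

lemma rate_ln {L : ℕ} [NeZero L] (β : ℝ) (d : Bool) (j : Fin L) :
    rate L β (ln d j) = rate L β (ln true 0) := by
  have h : ∀ j : Fin L, rate L β (ln true j) = rate L β (ln true 0) := fun j => by
    rw [← rate_shiftC β j (ln true 0), shiftC_ln_true, zero_add]
  cases d
  · rw [← rate_swapC, swapC_ln]; exact h j
  · exact h j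

lemma ln_injective {L : ℕ} [NeZero L] (hL : 2 ≤ L) {d d' : Bool} {j j' : Fin L}
    (h : (ln d j : ConfigP L) = ln d' j') : d = d' ∧ j = j' := by
  have : Nontrivial (Fin L) := ⟨⟨1, 0, one_ne hL⟩⟩
  obtain ⟨a, ha⟩ := exists_ne j
  obtain ⟨b, hb⟩ := exists_ne j'
  cases d <;> cases d'
  · exact ⟨rfl, by simpa [ln] using congrFun h (j, j)⟩
  · have := congrFun h (j, b); simp [ln, hb] at this
  · have := congrFun h (b, j); simp [ln, hb] at this
  · exact ⟨rfl, by simpa [ln] using congrFun h (j, j)⟩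

lemma ln_ne_zeroC {L : ℕ} (d : Bool) (j : Fin L) : ln d j ≠ zeroC L := by
  intro h
  have := congrFun h (j, j)
  cases d <;> simp [ln, zeroC] at this

/-- The rate of flipping one line. -/
lemma rate_line_bounds {L : ℕ} [NeZero L] {β : ℝ} (hc : Crit L β) :
    1 / 1024 / (L : ℝ) ^ 8 ≤ rate L β (ln true 0) ∧
      rate L β (ln true 0) ≤ 3 / (L : ℝ) ^ 8 := by
  have hL := hc.hundred_le
  have H := IsExt.sum (Finset.univ : Finset (Bool × Fin L)) (fun _ => (1 : ℝ))
    (fun p _ => isExt_hit L β (ln p.1 p.2))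
  set f : ConfigP L → ℝ := fun η => ∑ p : Bool × Fin L, 1 * ind (ln p.1 p.2) η with hf
  set h : ConfigP L → ℝ := fun η => ∑ p : Bool × Fin L, 1 * hit L β (ln p.1 p.2) η with hh
  have hf0 : ∀ σ, 0 ≤ f σ := fun σ =>
    Finset.sum_nonneg fun t _ => mul_nonneg (by norm_num) (ind_nonneg _ _)
  have hfz : ∀ B, (∀ d j, B ≠ ln d j) → f B = 0 := fun B hB =>
    Finset.sum_eq_zero fun p _ => by rw [ind_of_ne (hB p.1 p.2), mul_zero]
  have hfl : ∀ d j, f (ln d j) = 1 := by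
    intro d j
    simp only [hf]
    rw [Finset.sum_eq_single (d, j)]
    · simp [ind]
    · intro p _ hp
      rw [ind_of_ne, mul_zero]
      intro e
      have := ln_injective (by linarith [hc.big]) e
      exact hp (Prod.ext this.1.symm this.2.symm)
    · simp
  have hf1 : ∀ σ, f σ ≤ 1 := by
    intro σ
    by_cases hσ : ∃ d j, σ = ln d j
    · obtain ⟨d, j, rfl⟩ := hσ
      rw [hfl]
    · push Not at hσ
      rw [hfz σ hσ]; norm_num
  have hf2 : f (zeroC L) = 0 := hfz _ fun d j => (ln_ne_zeroC d j).symm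
  have hh0 : h (zeroC L) = 0 := by rw [H.eq_on _ (zeroC_mem L), hf2]
  have habs := H.abs_le_one hf0 hf1
  have hact : act L β h (zeroC L) = 2 * L * rate L β (ln true 0) := by
    simp only [hh]
    rw [act_lin]
    have hr : ∀ p : Bool × Fin L, act L β (hit L β (ln p.1 p.2)) (zeroC L) =
        rate L β (ln true 0) := fun p => rate_ln β p.1 p.2
    simp [hr, Finset.sum_const, Finset.card_univ]
  have hlow : ∀ d j x, -h (flipP L (xr (zeroC L) (ln d j)) x) ≤ -(1 / 6) := by
    intro d j x
    rw [zeroC_xr]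
    have key := act_single_le (h := fun σ => - h σ) (by linarith [hc.big]) hc.nonneg
      (fun σ => by rw [abs_neg]; exact habs σ) (ln_mem d j) x.1 x.2
    have hpos : ∀ σ, 0 ≤ h σ := H.ge (fun σ _ => hf0 σ)
    have h1 : h (ln d j) = 1 := by rw [H.eq_on _ (ln_mem d j), hfl]
    rw [H.neg.harm _ (single_not_mem (by linarith [hc.big]) (ln_mem d j) _), h1] at key
    have hs : slow L β ≤ 1 / 100 := by
      refine hc.slow_le.trans ?_
      rw [div_le_div_iff₀ (by positivity) (by norm_num)]
      nlinarith [pow_le_pow_left₀ (by norm_num) hL 4]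
    have e : flipP L (ln d j) x = flipP L (ln d j) (x.1, x.2) := rfl
    rw [e]
    linarith [hpos (flipP L (flipP L (ln d j) (x.1, x.2)) (x.1 - 1, x.2)),
      hpos (flipP L (flipP L (ln d j) (x.1, x.2)) (x.1 + 1, x.2)),
      hpos (flipP L (flipP L (ln d j) (x.1, x.2)) (x.1, x.2 - 1)),
      hpos (flipP L (flipP L (ln d j) (x.1, x.2)) (x.1, x.2 + 1))]
  constructor
  · have hx : ∀ x, 1 / (2 * (L : ℝ)) ≤ h (flipP L (zeroC L) x) := by
      intro x
      have h1 := le_near_ground (h := fun σ => - h σ) (by linarith [hc.big]) hc.nonneg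
        (fun σ => by rw [abs_neg]; exact habs σ) H.neg.harm (zeroC_mem L)
        (by rw [hh0, neg_zero]) hlow x
      have h3 : 10 * (L : ℝ) * slow L β ≤ 170 / (L : ℝ) ^ 3 := by
        calc 10 * (L : ℝ) * slow L β ≤ 10 * (L : ℝ) * (17 / (L : ℝ) ^ 4) :=
              mul_le_mul_of_nonneg_left hc.slow_le (by linarith)
          _ = 170 / (L : ℝ) ^ 3 := by field_simp; norm_num
      have h4 : 170 / (L : ℝ) ^ 3 ≤ (1 / 50) / L := by
        rw [div_le_div_iff₀ (by positivity) (by positivity)]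
        nlinarith [mul_le_mul hL hL (by norm_num) (by linarith)]
      have h5 : (26 / 50) / (L : ℝ) ≤ 1 / 6 * (4 / (L + 2)) := by
        rw [mul_div_assoc', div_le_div_iff₀ (by positivity) (by positivity)]
        nlinarith
      have h6 : 1 / (2 * (L : ℝ)) = (26 / 50) / L - (1 / 50) / L := by field_simp; norm_num
      linarith
    rw [act_zeroC hc hh0] at hact
    have h1 : (L : ℝ) ^ 2 * (1 / (2 * (L : ℝ))) ≤ ∑ x, h (flipP L (zeroC L) x) := by
      refine le_trans (le_of_eq ?_) (Finset.sum_le_sum fun x _ => hx x)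
      simp [pow_two]
    have h2 : 1 / (256 * (L : ℝ) ^ 8) * ((L : ℝ) ^ 2 * (1 / (2 * (L : ℝ)))) ≤
        2 * L * rate L β (ln true 0) := by
      rw [← hact]
      exact mul_le_mul hc.lower h1 (by positivity) (Real.exp_pos _).le
    have h3 : 1 / (256 * (L : ℝ) ^ 8) * ((L : ℝ) ^ 2 * (1 / (2 * (L : ℝ)))) =
        2 * L * (1 / 1024 / (L : ℝ) ^ 8) := by field_simp; norm_num
    rw [h3] at h2
    exact le_of_mul_le_mul_left h2 (by positivity)
  · have h1 := act_zeroC_le hc hh0 (by positivity)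
      (H.near_of_zero hc hf0 hf1 (zeroC_mem L) hf2)
    rw [hact] at h1
    have h3 : 5 / (L : ℝ) / (L : ℝ) ^ 6 ≤ 2 * L * (3 / (L : ℝ) ^ 8) := by
      have : 2 * L * (3 / (L : ℝ) ^ 8) = 6 / (L : ℝ) / (L : ℝ) ^ 6 := by field_simp; norm_num
      rw [this]
      gcongr
      norm_num
    exact le_of_mul_le_mul_left (h1.trans h3) (by positivity)


/-- The hypercube move which flips one line of the ground state `wInv L u`. -/
def lineMove {L : ℕ} (d : Bool) (j : Fin L) (u : Fin (2 * L - 1) → Bool) :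
    Fin (2 * L - 1) → Bool :=
  fun k =>
    if d = true ∧ j.val = L - 1 then !(u k)
    else if k.val = (if d then L + j.val else j.val) then !(u k) else u k

lemma wInv_lineMove {L : ℕ} (d : Bool) (j : Fin L) (u : Fin (2 * L - 1) → Bool) :
    wInv L (lineMove d j u) = xr (wInv L u) (ln d j) := by
  funext z
  obtain ⟨a, b⟩ := z
  have not_beq : ∀ x y : Bool, ((!x) == y) = !(x == y) := by decide
  have beq_not : ∀ x y : Bool, (x == !y) = !(x == y) := by decide
  have ha := a.isLt
  have hb := b.isLt
  have hj := j.isLt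
  cases d
  · by_cases h : b.val = L - 1
    · by_cases h2 : a = j
      · simp [wInv, lineMove, xr, ln, h, h2]
      · simp [wInv, lineMove, xr, ln, h, h2, Fin.val_inj]
    · have h3 : L + b.val ≠ j.val := by omega
      by_cases h2 : a = j
      · simp [wInv, lineMove, xr, ln, h, h2, h3, not_beq]
      · simp [wInv, lineMove, xr, ln, h, h2, h3, Fin.val_inj]
  · have h3 : a.val ≠ L + j.val := by omega
    by_cases h : b.val = L - 1
    · by_cases h2 : j.val = L - 1
      · simp [wInv, lineMove, xr, ln, h, h2, Fin.ext_iff]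
      · simp [wInv, lineMove, xr, ln, h, h2, h3, Fin.ext_iff, Ne.symm h2]
    · by_cases h2 : j.val = L - 1
      · simp [wInv, lineMove, xr, ln, h, h2, Fin.ext_iff]
      · by_cases h4 : b.val = j.val
        · simp [wInv, lineMove, xr, ln, h2, h3, h4, Fin.ext_iff, beq_not]
        · simp [wInv, lineMove, xr, ln, h, h2, h3, h4, Fin.ext_iff]

lemma wInv_injective {L : ℕ} : Function.Injective (wInv L) := by
  intro u v huv
  have h1 : ∀ i : Fin (2 * L - 1), i.val < L → u i = v i := by
    intro i hi
    have := congrFun huv (⟨i.val, hi⟩, ⟨L - 1, by omega⟩)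
    simpa [wInv] using this
  funext i
  by_cases hi : i.val < L
  · exact h1 i hi
  · have hi2 := i.isLt
    have := congrFun huv (⟨0, by omega⟩, ⟨i.val - L, by omega⟩)
    have h2 : i.val - L ≠ L - 1 := by omega
    have h3 : (⟨L + (i.val - L), by omega⟩ : Fin (2 * L - 1)) = i := Fin.ext (by simp; omega)
    have h4 := h1 ⟨0, by omega⟩ (show 0 < L by omega)
    simp only [wInv, h2, dite_false, h3, h4] at this
    revert this
    cases v ⟨0, by omega⟩ <;> cases u i <;> cases v i <;> simp

lemma hamDist_eq_one_or_negv_iff {L : ℕ} (hL : 0 < L) (u v : Fin (2 * L - 1) → Bool) :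
    (hamDist u v = 1 ∨ v = negv u) ↔ ∃ d j, v = lineMove d j u := by
  constructor
  · rintro (h | h)
    · obtain ⟨k, hk⟩ := Finset.card_eq_one.1 h
      have hv : ∀ i, u i ≠ v i ↔ i = k := fun i => by
        have := Finset.ext_iff.1 hk i
        simpa using this
      have hv2 : ∀ i, v i = if i = k then !(u i) else u i := fun i => by
        have := hv i
        split_ifs with h
        · have := this.2 h
          revert this; cases u i <;> cases v i <;> simp
        · exact (not_not.1 fun hn => h (this.1 hn)).symm
      have hk2 := k.isLt
      by_cases hkL : k.val < L
      · refine ⟨false, ⟨k.val, hkL⟩, ?_⟩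
        funext i
        simp [lineMove, hv2, Fin.ext_iff]
      · refine ⟨true, ⟨k.val - L, by omega⟩, ?_⟩
        funext i
        have h2 : k.val - L ≠ L - 1 := by omega
        have h3 : L + (k.val - L) = k.val := by omega
        simp [lineMove, hv2, Fin.ext_iff, h2, h3]
    · exact ⟨true, ⟨L - 1, by omega⟩, by funext i; simp [lineMove, h, negv]⟩
  · rintro ⟨d, j, rfl⟩
    by_cases h : d = true ∧ j.val = L - 1
    · right; funext i; simp [lineMove, h, negv]
    · left
      have hj := j.isLt
      have hlt : (if d then L + j.val else j.val) < 2 * L - 1 := by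
        cases d
        · simp; omega
        · simp at h ⊢; omega
      refine Finset.card_eq_one.2 ⟨⟨_, hlt⟩, ?_⟩
      ext i
      simp only [Finset.mem_filter, Finset.mem_univ, true_and, Finset.mem_singleton, lineMove,
        if_neg h, Fin.ext_iff]
      split_ifs <;> simp_all

lemma xr_wInv_eq_ln_iff {L : ℕ} (u v : Fin (2 * L - 1) → Bool) (d : Bool) (j : Fin L) :
    xr (wInv L u) (wInv L v) = ln d j ↔ v = lineMove d j u := by
  constructor
  · intro h
    apply wInv_injective
    rw [wInv_lineMove, ← h, xr_cancel]
  · rintro rfl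
    rw [wInv_lineMove, xr_cancel]

lemma xr_wInv_ne_zeroC {L : ℕ} {u v : Fin (2 * L - 1) → Bool} (huv : u ≠ v) :
    xr (wInv L u) (wInv L v) ≠ zeroC L := fun h => huv <| wInv_injective <| by
  rw [← xr_cancel (wInv L u) (wInv L v), h, xr_zeroC]

lemma crit_Lc {β : ℝ} (hβ : 200 ≤ β) : Crit (Lc β) β := by
  have hE : 101 ≤ Real.exp (β / 2) := by linarith [Real.add_one_le_exp (β / 2)]
  have hle : (Lc β : ℝ) ≤ Real.exp (β / 2) := Nat.floor_le (Real.exp_pos _).le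
  have hlt : Real.exp (β / 2) < Lc β + 1 := Nat.lt_floor_add_one _
  have hbig : 100 ≤ Lc β := Nat.le_floor (by push_cast; linarith)
  have hbig' : (100 : ℝ) ≤ Lc β := by exact_mod_cast hbig
  have hpos : (0 : ℝ) < Lc β := by linarith
  have e4 : Real.exp (-2 * β) = 1 / Real.exp (β / 2) ^ 4 := by
    rw [← Real.exp_nat_mul, one_div, ← Real.exp_neg]; congr 1; push_cast; ring
  have e8 : Real.exp (-4 * β) = 1 / Real.exp (β / 2) ^ 8 := by
    rw [← Real.exp_nat_mul, one_div, ← Real.exp_neg]; congr 1; push_cast; ring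
  have u4 : Real.exp (-2 * β) ≤ 1 / (Lc β : ℝ) ^ 4 := by rw [e4]; gcongr
  have u8 : Real.exp (-4 * β) ≤ 1 / (Lc β : ℝ) ^ 8 := by rw [e8]; gcongr
  refine ⟨hbig, by linarith, u8, ?_, ?_⟩
  · rw [e8, show 256 * (Lc β : ℝ) ^ 8 = (2 * Lc β) ^ 8 by ring]
    gcongr
    linarith
  · have h1 : (Lc β : ℝ) ^ 2 * Real.exp (-4 * β) ≤ 1 / (Lc β : ℝ) ^ 4 := by
      calc (Lc β : ℝ) ^ 2 * Real.exp (-4 * β) ≤ (Lc β : ℝ) ^ 2 * (1 / (Lc β : ℝ) ^ 8) := by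
            gcongr
        _ = 1 / (Lc β : ℝ) ^ 4 * (1 / (Lc β : ℝ) ^ 2) := by field_simp
        _ ≤ 1 / (Lc β : ℝ) ^ 4 * 1 := by
            gcongr
            rw [div_le_one (by positivity)]
            exact one_le_pow₀ (by linarith)
        _ = 1 / (Lc β : ℝ) ^ 4 := mul_one _
    have h2 : 17 / (Lc β : ℝ) ^ 4 = 1 / (Lc β : ℝ) ^ 4 + 16 * (1 / (Lc β : ℝ) ^ 4) := by ring
    rw [slow, h2]
    linarith

end SPMP

open SPMP

/-- Corollary `LemmaHyperComp`, hypercube comparison for the trace chain: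
there are `a_L ≍ L⁻⁸` and `0 ≤ a_L' ≲ L⁻⁹` such that the trace generator `Q_𝒢`, transported
to the hypercube via `w`, agrees with `Q_hyp` up to an error `O(L⁻⁹)` in each off-diagonal
entry. -/
theorem trace_hypercube_comparison :
    ∃ c₁ c₂ C C' β₀ : ℝ, 0 < c₁ ∧ 0 < c₂ ∧ 0 < C ∧ 0 < C' ∧
      ∀ β : ℝ, β₀ ≤ β → ∃ a a' : ℝ,
        c₁ / (Lc β : ℝ) ^ 8 ≤ a ∧ a ≤ c₂ / (Lc β : ℝ) ^ 8 ∧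
        0 ≤ a' ∧ a' ≤ C / (Lc β : ℝ) ^ 9 ∧
        ∀ u v : Fin (2 * Lc β - 1) → Bool, u ≠ v →
          ∀ (hu : wInv (Lc β) u ∈ GroundP (Lc β)) (hv : wInv (Lc β) v ∈ GroundP (Lc β)),
            |traceGen (Lc β) β ⟨wInv (Lc β) u, hu⟩ ⟨wInv (Lc β) v, hv⟩ -
                Qhyp (Lc β) a a' u v| ≤ C' / (Lc β : ℝ) ^ 9 := by
  refine ⟨1 / 1024, 3, 1, 258, 200, by norm_num, by norm_num, by norm_num, by norm_num, ?_⟩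
  intro β hβ
  have hc := crit_Lc hβ
  have hL : 0 < Lc β := by linarith [hc.big]
  have : NeZero (Lc β) := ⟨hL.ne'⟩
  refine ⟨rate (Lc β) β (ln true 0), 0, (rate_line_bounds hc).1, (rate_line_bounds hc).2,
    le_rfl, by positivity, ?_⟩
  intro u v huv hu hv
  rw [traceGen_eq, act_hit_eq_rate hu, Qhyp, if_neg huv]
  have h0 := xr_wInv_ne_zeroC huv
  by_cases h : hamDist u v = 1 ∨ v = negv u
  · obtain ⟨d, j, hdj⟩ := (hamDist_eq_one_or_negv_iff hL u v).1 h
    rw [if_pos h, (xr_wInv_eq_ln_iff u v d j).2 hdj, rate_ln, sub_self, abs_zero]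
    positivity
  · rw [if_neg h, ite_self, sub_zero, abs_of_nonneg (rate_nonneg hc h0)]
    exact rate_not_line hc h0 fun d j hdj =>
      h ((hamDist_eq_one_or_negv_iff hL u v).2 ⟨d, j, (xr_wInv_eq_ln_iff u v d j).1 hdj⟩)

end
end

section
/- Cutoff upper bound for the perturbed hypercube walk: let {a_L}, {a_L'} be sequences with c₁L^{-8}≤a_L≤c₂L^{-8} and 0≤a_L'≤CL^{-9}, and let Q_hyp be the rate matrix on {-1,+1}^{2L-1} with Q_hyp(u,v)=a_L if |u−v|=1 or u=−v, Q_hyp(u,v)=a_L' if |u−v|∈{2,2L−2}, and 0 for all other u≠v (diagonal making rows sum to zero). Then for every δ>0, with T_{δ,+}=((1+δ)/4)·a_L^{-1}·log L, one has lim_{L→∞} max_{u∈{-1,+1}^{2L-1}} ‖e^{T_{δ,+}Q_hyp}(u,·) − μ(·)‖_TV = 0, where μ is the uniform measure on {-1,+1}^{2L-1}. -/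
open scoped BigOperators

attribute [local instance] Classical.propDecidable

noncomputable section

namespace Hyp

/-- Hamming distance on the hypercube `{-1,+1}^N` (coded by `Bool`). -/
def hamDist {N : ℕ} (u v : Fin N → Bool) : ℕ :=
  (Finset.univ.filter fun i : Fin N => u i ≠ v i).card

/-- Coordinatewise negation on the hypercube. -/
def negv {N : ℕ} (u : Fin N → Bool) : Fin N → Bool := fun i => !(u i)

/-- The rate matrix `Q_hyp` on `{-1,+1}^{2L-1}`: rate `a` across Hamming distance `1` and to
the antipode, rate `a'` across Hamming distances `2` and `2L-2`, zero for all other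
off-diagonal pairs, diagonal making rows sum to zero. -/
def Qhyp (L : ℕ) (a a' : ℝ) :
    Matrix (Fin (2 * L - 1) → Bool) (Fin (2 * L - 1) → Bool) ℝ :=
  fun u v =>
    if u = v then
      -(∑ w ∈ Finset.univ.filter (fun w => w ≠ u),
        (if hamDist u w = 1 ∨ w = negv u then a
         else if hamDist u w = 2 ∨ hamDist u w = 2 * L - 2 then a' else 0))
    else
      if hamDist u v = 1 ∨ v = negv u then a
      else if hamDist u v = 2 ∨ hamDist u v = 2 * L - 2 then a' else 0

/-- Entrywise matrix exponential `∑ₖ Aᵏ/k!`. -/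
def mexp {n : Type*} [Fintype n] [DecidableEq n] (A : Matrix n n ℝ) : Matrix n n ℝ :=
  fun i j => ∑' k : ℕ, (A ^ k) i j / (Nat.factorial k : ℝ)

/-- Total-variation distance between two (probability) vectors. -/
def tv {n : Type*} [Fintype n] (μ ν : n → ℝ) : ℝ := (∑ s, |μ s - ν s|) / 2

end Hyp

open Hyp

namespace Hyp

/-- The sign in `{-1,+1}` coded by a Boolean. -/
def sgn (b : Bool) : ℝ := if b then -1 else 1

/-- The Walsh character of the hypercube indexed by a set of coordinates. -/
def walsh {N : ℕ} (S : Finset (Fin N)) (u : Fin N → Bool) : ℝ := ∏ i ∈ S, sgn (u i)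

/-- Coordinatewise exclusive or. -/
def xorv {N : ℕ} (u z : Fin N → Bool) : Fin N → Bool := fun i => xor (u i) (z i)

/-- The off-diagonal jump rates of `Qhyp`. -/
def rate (L : ℕ) (a a' : ℝ) (u v : Fin (2 * L - 1) → Bool) : ℝ :=
  if hamDist u v = 1 ∨ v = negv u then a
  else if hamDist u v = 2 ∨ hamDist u v = 2 * L - 2 then a' else 0

/-- The eigenvalue of `-Qhyp` at the Walsh character indexed by `S`. -/
def walshEigenvalue (L : ℕ) (a a' : ℝ) (S : Finset (Fin (2 * L - 1))) : ℝ :=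
  ∑ z, rate L a a' (fun _ => false) z * (1 - walsh S z)

lemma walsh_mul_self {N : ℕ} (S : Finset (Fin N)) (u : Fin N → Bool) :
    walsh S u * walsh S u = 1 := by
  rw [walsh, ← Finset.prod_mul_distrib]
  refine Finset.prod_eq_one fun i _ => ?_
  cases u i <;> simp [sgn]

lemma walsh_le_one {N : ℕ} (S : Finset (Fin N)) (u : Fin N → Bool) : walsh S u ≤ 1 := by
  nlinarith [walsh_mul_self S u, sq_nonneg (walsh S u - 1)]

lemma walsh_xorv {N : ℕ} (S : Finset (Fin N)) (u z : Fin N → Bool) :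
    walsh S (xorv u z) = walsh S u * walsh S z := by
  rw [walsh, walsh, walsh, ← Finset.prod_mul_distrib]
  refine Finset.prod_congr rfl fun i _ => ?_
  cases h : u i <;> cases h' : z i <;> simp [sgn, xorv, h, h']

lemma sum_walsh_mul_walsh {N : ℕ} (u v : Fin N → Bool) :
    ∑ S, walsh S u * walsh S v = if u = v then (2 : ℝ) ^ N else 0 := by
  have h : ∑ S, walsh S u * walsh S v = ∏ i, (1 + sgn (u i) * sgn (v i)) := by
    rw [Finset.prod_one_add, Finset.powerset_univ]
    simp [walsh, Finset.prod_mul_distrib]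
  rw [h]
  split_ifs with huv
  · subst huv
    have : ∀ i, 1 + sgn (u i) * sgn (u i) = 2 := fun i => by
      cases u i <;> norm_num [sgn]
    simp [this]
  · obtain ⟨i, hi⟩ := Function.ne_iff.mp huv
    refine Finset.prod_eq_zero (Finset.mem_univ i) ?_
    cases h : u i <;> cases h' : v i <;> simp_all [sgn]

lemma sum_walsh_eq_zero {N : ℕ} {S : Finset (Fin N)} (hS : S.Nonempty) :
    ∑ u, walsh S u = 0 := by
  have h : ∀ u, walsh S u = ∏ i, if i ∈ S then sgn (u i) else 1 := fun u => by
    simp [walsh, Finset.prod_ite_mem]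
  obtain ⟨i, hi⟩ := hS
  simp_rw [h]
  rw [← Fintype.piFinset_univ,
    ← Finset.prod_univ_sum (fun _ => Finset.univ) (fun i b => if i ∈ S then sgn b else 1)]
  exact Finset.prod_eq_zero (Finset.mem_univ i) (by simp [hi, sgn])

/-- Parseval's identity for Walsh characters. -/
lemma sum_sq_walsh_coeff {N : ℕ} (f : (Fin N → Bool) → ℝ) :
    ∑ S, (∑ v, f v * walsh S v) ^ 2 = 2 ^ N * ∑ v, f v ^ 2 := by
  calc ∑ S, (∑ v, f v * walsh S v) ^ 2
      = ∑ S, ∑ v, ∑ w, f v * f w * (walsh S v * walsh S w) := by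
        refine Finset.sum_congr rfl fun S _ => ?_
        rw [sq, Finset.sum_mul_sum]
        exact Finset.sum_congr rfl fun v _ => Finset.sum_congr rfl fun w _ => by ring
    _ = ∑ v, ∑ w, f v * f w * ∑ S, walsh S v * walsh S w := by
        rw [Finset.sum_comm]
        refine Finset.sum_congr rfl fun v _ => ?_
        rw [Finset.sum_comm]
        exact Finset.sum_congr rfl fun w _ => by rw [Finset.mul_sum]
    _ = 2 ^ N * ∑ v, f v ^ 2 := by
        rw [Finset.mul_sum]
        refine Finset.sum_congr rfl fun v _ => ?_
        simp only [sum_walsh_mul_walsh, mul_ite, mul_zero, Finset.sum_ite_eq, Finset.mem_univ,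
          if_true]
        ring

lemma summable_pow_apply_div_factorial {n : Type*} [Fintype n] [DecidableEq n]
    (A : Matrix n n ℝ) (i j : n) :
    Summable fun k : ℕ => (A ^ k) i j / (Nat.factorial k : ℝ) := by
  let := Matrix.linftyOpNormedRing (n := n) (α := ℝ)
  let := Matrix.linftyOpNormedAlgebra (n := n) (R := ℝ) (α := ℝ)
  have h := NormedSpace.expSeries_summable' (𝕂 := ℝ) A
  have h' := Pi.summable.mp (Pi.summable.mp h i) j
  refine h'.congr fun k => ?_
  simp [Matrix.smul_apply, div_eq_inv_mul]

lemma mexp_mulVec_of_eigenvector {n : Type*} [Fintype n] [DecidableEq n] {A : Matrix n n ℝ}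
    {f : n → ℝ} {c : ℝ} (h : A.mulVec f = c • f) (u : n) :
    ∑ v, mexp A u v * f v = Real.exp c * f u := by
  have hpow : ∀ k : ℕ, (A ^ k).mulVec f = c ^ k • f := fun k => by
    induction k with
    | zero => simp
    | succ k ih => rw [pow_succ, ← Matrix.mulVec_mulVec, h, Matrix.mulVec_smul, ih, smul_smul,
        pow_succ, mul_comm]
  simp only [mexp, ← tsum_mul_right]
  rw [← Summable.tsum_finsetSum fun v _ =>
    (summable_pow_apply_div_factorial A u v).mul_right (f v)]
  rw [Real.exp_eq_exp_ℝ, NormedSpace.exp_eq_tsum_div, ← tsum_mul_right]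
  refine tsum_congr fun k => ?_
  have hk := congrFun (hpow k) u
  simp only [Matrix.mulVec, dotProduct, Pi.smul_apply, smul_eq_mul] at hk
  rw [div_mul_eq_mul_div, ← hk, Finset.sum_div]
  exact Finset.sum_congr rfl fun v _ => by ring

lemma xorv_xorv {N : ℕ} (u z : Fin N → Bool) : xorv u (xorv u z) = z := by
  funext i
  simp [xorv]

lemma rate_xorv (L : ℕ) (a a' : ℝ) (u z : Fin (2 * L - 1) → Bool) :
    rate L a a' u (xorv u z) = rate L a a' (fun _ => false) z := by
  have h₁ : hamDist u (xorv u z) = hamDist (fun _ => false) z := by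
    unfold hamDist
    congr 1
    ext i
    rw [Finset.mem_filter, Finset.mem_filter]
    cases h' : z i <;> simp [xorv, h']
  have h₂ : xorv u z = negv u ↔ z = negv (fun _ => false) := by
    simp only [funext_iff]
    refine forall_congr' fun i => ?_
    cases h : u i <;> cases h' : z i <;> simp [xorv, negv, h, h']
  simp only [rate, h₁, h₂]

lemma Qhyp_mulVec_walsh (L : ℕ) (a a' : ℝ) (S : Finset (Fin (2 * L - 1))) :
    (Qhyp L a a').mulVec (walsh S) = (-walshEigenvalue L a a' S) • walsh S := by
  funext u
  have hQ : ∀ v, Qhyp L a a' u v = (if v = u then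
      -(∑ w ∈ Finset.univ.filter (fun w => w ≠ u), rate L a a' u w) - rate L a a' u u else 0)
      + rate L a a' u v := fun v => by
    by_cases h : v = u
    · subst h; simp [Qhyp, rate]
    · simp [Qhyp, rate, h, Ne.symm h]
  have hsum : ∑ w ∈ Finset.univ.filter (fun w => w ≠ u), rate L a a' u w + rate L a a' u u
      = ∑ w, rate L a a' u w := by
    rw [Finset.filter_ne', Finset.sum_erase_add _ _ (Finset.mem_univ u)]
  let e : (Fin (2 * L - 1) → Bool) ≃ (Fin (2 * L - 1) → Bool) :=
    ⟨xorv u, xorv u, xorv_xorv u, xorv_xorv u⟩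
  have he : ∀ g : (Fin (2 * L - 1) → Bool) → ℝ, ∑ w, g w = ∑ z, g (xorv u z) :=
    fun g => (Equiv.sum_comp e g).symm
  calc (Qhyp L a a').mulVec (walsh S) u
      = ∑ v, Qhyp L a a' u v * walsh S v := rfl
    _ = -(∑ w, rate L a a' u w) * walsh S u + ∑ w, rate L a a' u w * walsh S w := by
        simp only [hQ, add_mul, Finset.sum_add_distrib, ite_mul, zero_mul, Finset.sum_ite_eq',
          Finset.mem_univ, if_true]
        rw [← hsum]
        ring
    _ = _ := by
        rw [he, he (fun w => rate L a a' u w * walsh S w)]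
        simp only [rate_xorv, walsh_xorv, walshEigenvalue, Pi.smul_apply, smul_eq_mul]
        rw [← Finset.sum_neg_distrib, ← Finset.sum_neg_distrib, Finset.sum_mul, Finset.sum_mul,
          ← Finset.sum_add_distrib]
        exact Finset.sum_congr rfl fun z _ => by ring

lemma rate_nonneg {L : ℕ} {a a' : ℝ} (ha : 0 ≤ a) (ha' : 0 ≤ a')
    (u v : Fin (2 * L - 1) → Bool) : 0 ≤ rate L a a' u v := by
  unfold rate
  split_ifs <;> simp [ha, ha']

lemma walshEigenvalue_empty (L : ℕ) (a a' : ℝ) : walshEigenvalue L a a' ∅ = 0 := by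
  simp [walshEigenvalue, walsh]

/-- The single-coordinate flips alone contribute `2 a |S|` to the eigenvalue. -/
lemma le_walshEigenvalue {L : ℕ} {a a' : ℝ} (ha : 0 ≤ a) (ha' : 0 ≤ a')
    (S : Finset (Fin (2 * L - 1))) : 2 * a * S.card ≤ walshEigenvalue L a a' S := by
  let flip : Fin (2 * L - 1) → (Fin (2 * L - 1) → Bool) := fun i j => decide (j = i)
  have hflip : Function.Injective flip := fun i j h => by
    have := congrFun h i
    simpa [flip] using this
  have hrate : ∀ i, rate L a a' (fun _ => false) (flip i) = a := fun i => by
    have : hamDist (fun _ => false) (flip i) = 1 := by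
      refine Finset.card_eq_one.mpr ⟨i, ?_⟩
      ext j
      rw [Finset.mem_filter]
      simp [flip]
    simp [rate, this]
  have hwalsh : ∀ i ∈ S, walsh S (flip i) = -1 := fun i hi => by
    rw [walsh, Finset.prod_eq_single_of_mem i hi]
    · simp [sgn, flip]
    · intro j _ hj
      simp [sgn, flip, hj]
  calc 2 * a * S.card
      = ∑ i ∈ S, rate L a a' (fun _ => false) (flip i) * (1 - walsh S (flip i)) := by
        rw [Finset.sum_congr rfl fun i hi => by rw [hrate, hwalsh i hi], Finset.sum_const,
          nsmul_eq_mul]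
        ring
    _ = ∑ z ∈ S.map ⟨flip, hflip⟩, rate L a a' (fun _ => false) z * (1 - walsh S z) := by
        simp
    _ ≤ walshEigenvalue L a a' S :=
        Finset.sum_le_sum_of_subset_of_nonneg (Finset.subset_univ _) fun z _ _ =>
          mul_nonneg (rate_nonneg ha ha' _ _) (sub_nonneg.mpr (walsh_le_one S z))

/-- The `L²` bound on the total-variation distance to equilibrium at time `t`. -/
lemma tv_mexp_Qhyp_le {L : ℕ} {a a' t : ℝ} (ha : 0 ≤ a) (ha' : 0 ≤ a') (ht : 0 ≤ t)
    (u : Fin (2 * L - 1) → Bool) :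
    tv (mexp (t • Qhyp L a a') u) (fun _ => (1 : ℝ) / 2 ^ (2 * L - 1)) ≤
      √((Real.exp (-(4 * a * t)) + 1) ^ (2 * L - 1) - 1) / 2 := by
  set x := Real.exp (-(4 * a * t)) with hx
  set f : (Fin (2 * L - 1) → Bool) → ℝ := fun v => mexp (t • Qhyp L a a') u v - 1 / 2 ^ (2 * L - 1) with hf
  have hcoeff : ∀ S : Finset (Fin (2 * L - 1)), (∑ v, f v * walsh S v)
      = Real.exp (-(t * walshEigenvalue L a a' S)) * walsh S u
        - 1 / 2 ^ (2 * L - 1) * ∑ v, walsh S v := fun S => by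
    have h : (t • Qhyp L a a').mulVec (walsh S)
        = (-(t * walshEigenvalue L a a' S)) • walsh S := by
      rw [Matrix.smul_mulVec, Qhyp_mulVec_walsh, smul_smul, mul_neg]
    rw [← mexp_mulVec_of_eigenvector h u, Finset.mul_sum, ← Finset.sum_sub_distrib]
    exact Finset.sum_congr rfl fun v _ => by simp only [hf]; ring
  have hempty : ∑ v, f v * walsh ∅ v = 0 := by
    rw [hcoeff, walshEigenvalue_empty]
    simp [walsh]
  have hterm : ∀ S : Finset (Fin (2 * L - 1)), S ≠ ∅ → (∑ v, f v * walsh S v) ^ 2 ≤ x ^ S.card := by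
    intro S hS
    rw [hcoeff, sum_walsh_eq_zero (Finset.nonempty_iff_ne_empty.mpr hS), mul_zero, sub_zero,
      mul_pow, sq (walsh S u), walsh_mul_self, mul_one, hx, ← Real.exp_nat_mul,
      ← Real.exp_nat_mul]
    refine Real.exp_le_exp.mpr ?_
    have := mul_le_mul_of_nonneg_left (le_walshEigenvalue ha ha' S) ht
    push_cast
    linarith
  have hsum : 2 ^ (2 * L - 1) * ∑ v, f v ^ 2 ≤ (x + 1) ^ (2 * L - 1) - 1 := by
    rw [← sum_sq_walsh_coeff, ← Finset.add_sum_erase _ _ (Finset.mem_univ ∅), hempty]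
    have hbinom : ∑ S : Finset (Fin (2 * L - 1)), x ^ S.card = (x + 1) ^ (2 * L - 1) := by
      simpa using Fintype.sum_pow_mul_eq_add_pow (Fin (2 * L - 1)) x 1
    rw [← hbinom, ← Finset.add_sum_erase _ _ (Finset.mem_univ (∅ : Finset (Fin (2 * L - 1))))]
    have := Finset.sum_le_sum fun S (hS : S ∈ Finset.univ.erase ∅) =>
      hterm S (Finset.ne_of_mem_erase hS)
    simpa using this
  have hcs : (∑ v, |f v|) ^ 2 ≤ 2 ^ (2 * L - 1) * ∑ v, f v ^ 2 := by
    have := sq_sum_le_card_mul_sum_sq (s := Finset.univ) (f := fun v => |f v|)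
    simpa using this
  unfold tv
  gcongr
  exact Real.le_sqrt_of_sq_le (hcs.trans hsum)

end Hyp

/-- Lemma `LemmaCutoffSRWWithJump`, upper bound: for the perturbed
hypercube walk `Q_hyp` with rates `a_L ≍ L⁻⁸` and `0 ≤ a_L' ≲ L⁻⁹`, at time
`T_{δ,+} = ((1+δ)/4) a_L⁻¹ log L` the worst-case total-variation distance to the uniform
measure tends to `0`. -/
theorem hypercube_cutoff_upper (c₁ c₂ C : ℝ) (hc₁ : 0 < c₁) (hc₂ : 0 < c₂) (hC : 0 < C)
    (a a' : ℕ → ℝ)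
    (ha : ∀ L : ℕ, c₁ / (L : ℝ) ^ 8 ≤ a L ∧ a L ≤ c₂ / (L : ℝ) ^ 8)
    (ha' : ∀ L : ℕ, 0 ≤ a' L ∧ a' L ≤ C / (L : ℝ) ^ 9)
    (δ : ℝ) (hδ : 0 < δ) :
    Filter.Tendsto
      (fun L : ℕ =>
        ⨆ u : Fin (2 * L - 1) → Bool,
          tv (mexp (((1 + δ) / 4 * (a L)⁻¹ * Real.log (L : ℝ)) • Qhyp L (a L) (a' L)) u)
            (fun _ => (1 : ℝ) / 2 ^ (2 * L - 1)))
      Filter.atTop (nhds 0) := by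
  have hlim : Filter.Tendsto
      (fun L : ℕ => √(Real.exp (2 * Real.exp (-(δ * Real.log (L : ℝ)))) - 1) / 2)
      Filter.atTop (nhds 0) := by
    have hlog : Filter.Tendsto (fun L : ℕ => δ * Real.log (L : ℝ)) Filter.atTop Filter.atTop :=
      (Real.tendsto_log_atTop.comp tendsto_natCast_atTop_atTop).const_mul_atTop hδ
    have hexp := Real.tendsto_exp_neg_atTop_nhds_zero.comp hlog
    have hcont : Continuous fun y : ℝ => √(Real.exp (2 * y) - 1) / 2 := by fun_prop
    simpa [Function.comp_def] using (hcont.tendsto 0).comp hexp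
  refine tendsto_of_tendsto_of_tendsto_of_le_of_le' tendsto_const_nhds hlim
    (Filter.Eventually.of_forall fun L => Real.iSup_nonneg fun u => by unfold tv; positivity) ?_
  filter_upwards [Filter.eventually_ge_atTop 1] with L hL
  have hL' : (1 : ℝ) ≤ L := by exact_mod_cast hL
  have hpos : 0 < a L := lt_of_lt_of_le (by positivity) (ha L).1
  have hlog : 0 ≤ Real.log (L : ℝ) := Real.log_nonneg hL'
  refine ciSup_le fun u => ?_
  refine (tv_mexp_Qhyp_le hpos.le (ha' L).1 (by positivity) u).trans ?_
  have htime : 4 * a L * ((1 + δ) / 4 * (a L)⁻¹ * Real.log (L : ℝ))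
      = Real.log (L : ℝ) + δ * Real.log (L : ℝ) := by
    field_simp
  rw [htime]
  set y := Real.exp (-(δ * Real.log (L : ℝ))) with hy
  have hx : Real.exp (-(Real.log (L : ℝ) + δ * Real.log (L : ℝ))) = (L : ℝ)⁻¹ * y := by
    rw [neg_add, Real.exp_add, Real.exp_neg, Real.exp_log (by linarith)]
  have hN : ((2 * L - 1 : ℕ) : ℝ) ≤ 2 * L := by
    exact_mod_cast Nat.sub_le (2 * L) 1
  have hypos : 0 < y := Real.exp_pos _
  rw [hx]
  gcongr
  calc ((L : ℝ)⁻¹ * y + 1) ^ (2 * L - 1)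
      ≤ Real.exp ((L : ℝ)⁻¹ * y) ^ (2 * L - 1) :=
        pow_le_pow_left₀ (by positivity) (Real.add_one_le_exp _) _
    _ = Real.exp ((2 * L - 1 : ℕ) * ((L : ℝ)⁻¹ * y)) := (Real.exp_nat_mul _ _).symm
    _ ≤ Real.exp (2 * y) := by
        refine Real.exp_le_exp.mpr ?_
        calc ((2 * L - 1 : ℕ) : ℝ) * ((L : ℝ)⁻¹ * y) ≤ 2 * L * ((L : ℝ)⁻¹ * y) := by gcongr
          _ = 2 * y := by field_simp

end
end
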